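/- arXiv:2411.11316 — 2 statements merged into one kernel-verified Lean document; each statement's English description precedes it below -/
import Mathlib

section
/- Let P ∈ ℝ[x] be a polynomial whose coefficient of x is non-Liouville. Then S(X)/X → 1/ζ(2) = 6/π² as X → ∞. -/
open Real Finset

/-- `α` is Liouville: for every `n ∈ ℕ` there are integers `p, q` with `q > 1`
and `|α - p/q| ≤ q^(-n)`. -/
def IsLiouvilleReal (α : ℝ) : Prop :=
  ∀ n : ℕ, ∃ p q : ℤ, 1 < q ∧ |α - (p : ℝ) / (q : ℝ)| ≤ (q : ℝ) ^ (-(n : ℤ))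

open Classical in
/-- The finset of primes `p < z`. -/
noncomputable def primesLt (z : ℝ) : Finset ℕ :=
  (Finset.range ⌈z⌉₊).filter fun p => p.Prime ∧ (p : ℝ) < z

/-- `P_z`, the product of all primes `p < z`. -/
noncomputable def Pz (z : ℝ) : ℕ := ∏ p ∈ primesLt z, p

open Classical in
/-- `S(X)`: the number of naturals `1 ≤ x ≤ X` with `gcd(x, ⌊P(x)⌋) = 1`. -/
noncomputable def S (P : Polynomial ℝ) (X : ℝ) : ℕ :=
  ((Finset.Icc 1 ⌊X⌋₊).filter fun x => Int.gcd (x : ℤ) ⌊P.eval (x : ℝ)⌋ = 1).card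

open Classical in
/-- `A_d(X)`: the set of naturals `1 ≤ x ≤ X` with `d ∣ x` and `d ∣ ⌊P(x)⌋`. -/
noncomputable def AP (P : Polynomial ℝ) (d : ℕ) (X : ℝ) : Finset ℕ :=
  (Finset.Icc 1 ⌊X⌋₊).filter fun x => (d : ℤ) ∣ (x : ℤ) ∧ (d : ℤ) ∣ ⌊P.eval (x : ℝ)⌋

open Classical in
/-- `S(X, z)`: the number of naturals `1 ≤ x ≤ X` with `gcd(gcd(x, ⌊P(x)⌋), P_z) = 1`. -/
noncomputable def S2 (P : Polynomial ℝ) (X z : ℝ) : ℕ :=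
  ((Finset.Icc 1 ⌊X⌋₊).filter fun x =>
    Nat.gcd (Int.gcd (x : ℤ) ⌊P.eval (x : ℝ)⌋) (Pz z) = 1).card

/-- `z = X ^ (c / log log X)` with `c = 1/(2(A+1))`. -/
noncomputable def zf (A X : ℝ) : ℝ := X ^ ((1 / (2 * (A + 1))) / Real.log (Real.log X))


namespace WS

/-- `e(t) = exp(2 π i t)`. -/
noncomputable def e (t : ℝ) : ℂ := Complex.exp (Complex.I * ((2 * π * t : ℝ) : ℂ))

lemma e_add (s t : ℝ) : e (s + t) = e s * e t := by
  unfold e; rw [← Complex.exp_add]; congr 1; push_cast; ring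

lemma norm_e (t : ℝ) : ‖e t‖ = 1 := by
  unfold e; rw [mul_comm]; exact Complex.norm_exp_ofReal_mul_I _

lemma e_int (n : ℤ) : e n = 1 := by
  unfold e; rw [Complex.exp_eq_one_iff]; exact ⟨n, by push_cast; ring⟩

lemma e_zero : e 0 = 1 := by simpa using e_int 0

lemma e_add_int (t : ℝ) (n : ℤ) : e (t + n) = e t := by rw [e_add, e_int, mul_one]

lemma e_nat_mul (n : ℕ) (t : ℝ) : e (n * t) = e t ^ n := by
  unfold e; rw [← Complex.exp_nat_mul]; congr 1; push_cast; ring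

lemma conj_e (t : ℝ) : (starRingEnd ℂ) (e t) = e (-t) := by
  unfold e; rw [← Complex.exp_conj]; congr 1
  simp only [map_mul, Complex.conj_I, Complex.conj_ofReal]; push_cast; ring

lemma norm_e_sub_one_le (t : ℝ) : ‖e t - 1‖ ≤ 2 * π * |t| := by
  unfold e; rw [Complex.norm_exp_I_mul_ofReal_sub_one]
  rw [Real.norm_eq_abs, abs_mul, abs_of_pos (by norm_num : (0:ℝ) < 2)]
  have : |Real.sin (2 * π * t / 2)| ≤ |2 * π * t / 2| := Real.abs_sin_le_abs
  have h2 : |2 * π * t / 2| = π * |t| := by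
    rw [show 2 * π * t / 2 = π * t by ring, abs_mul, abs_of_pos Real.pi_pos]
  linarith

lemma norm_e_sub_one_ge (t : ℝ) : 4 * |t - round t| ≤ ‖e t - 1‖ := by
  have h0 : e t = e (t - round t) := by
    conv_lhs => rw [show t = (t - round t) + (round t : ℤ) by ring]
    rw [e_add_int]
  rw [h0]
  set s := t - round t
  have hs : |s| ≤ 1/2 := abs_sub_round t
  unfold e; rw [Complex.norm_exp_I_mul_ofReal_sub_one]
  rw [Real.norm_eq_abs, abs_mul, abs_of_pos (by norm_num : (0:ℝ) < 2)]
  have h2 : |2 * π * s / 2| = π * |s| := by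
    rw [show 2 * π * s / 2 = π * s by ring, abs_mul, abs_of_pos Real.pi_pos]
  have := @Real.mul_abs_le_abs_sin (2 * π * s / 2) (by rw [h2]; nlinarith [Real.pi_pos])
  rw [h2, ← mul_assoc, div_mul_cancel₀ _ Real.pi_ne_zero] at this
  linarith

lemma tri_sum (F : ℕ → ℕ → ℂ) (M : ℕ) :
    ∑ x ∈ range M, ∑ y ∈ range (x + 1), F x y =
      ∑ h ∈ range M, ∑ y ∈ range (M - h), F (y + h) y := by
  induction M with
  | zero => simp
  | succ M ih =>
    rw [sum_range_succ, ih]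
    have : ∀ h ∈ range (M + 1), ∑ y ∈ range (M + 1 - h), F (y + h) y
        = ∑ y ∈ range (M - h), F (y + h) y + F M (M - h) := by
      intro h hh
      have hh' : h ≤ M := by simpa [Nat.lt_succ_iff] using hh
      rw [Nat.succ_sub hh', sum_range_succ, Nat.sub_add_cancel hh']
    rw [sum_congr rfl this, sum_add_distrib,
      sum_range_succ (fun h => ∑ y ∈ range (M - h), F (y + h) y) M]
    simp only [Nat.sub_self, range_zero, sum_empty, add_zero]
    congr 1
    exact (sum_range_reflect (fun y => F M y) (M + 1)).symm.trans
      (sum_congr rfl fun y _ => by simp)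

lemma vdc (u : ℕ → ℂ) (hu : ∀ n, ‖u n‖ = 1) (M : ℕ) :
    ‖∑ x ∈ range M, u x‖ ^ 2 ≤
      2 * ∑ h ∈ range M, ‖∑ y ∈ range (M - h), u (y + h) * (starRingEnd ℂ) (u y)‖ := by
  have key : ∀ M : ℕ, ‖∑ x ∈ range M, u x‖ ^ 2 + M =
      2 * (∑ x ∈ range M, ∑ y ∈ range (x + 1), u x * (starRingEnd ℂ) (u y)).re := by
    intro M
    induction M with
    | zero => simp
    | succ M ih =>
      rw [sum_range_succ, sum_range_succ _ M, Complex.add_re, mul_add, ← ih, sum_range_succ _ M,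
        ← mul_sum, ← map_sum, Complex.sq_norm, Complex.sq_norm, Complex.normSq_add,
        Complex.mul_conj, Complex.normSq_eq_norm_sq (u M), hu]
      have : (∑ x ∈ range M, u x) * (starRingEnd ℂ) (u M) =
        (starRingEnd ℂ) (u M * (starRingEnd ℂ) (∑ x ∈ range M, u x)) := by
        simp [mul_comm]
      rw [this, Complex.conj_re, Complex.add_re]
      push_cast
      simp
      ring
  have h1 := key M
  rw [tri_sum (fun x y => u x * (starRingEnd ℂ) (u y))] at h1
  have h2 := (Complex.re_le_norm (∑ h ∈ range M, ∑ y ∈ range (M - h),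
    u (y + h) * (starRingEnd ℂ) (u y))).trans (norm_sum_le _ _)
  have : (0:ℝ) ≤ M := Nat.cast_nonneg M
  linarith

set_option maxHeartbeats 1000000 in
/-- Vinogradov-type lemma. -/
lemma vino (K N : ℕ) (hK : 2 ≤ K) (hN : 40 * K ^ 2 ≤ N) (T γ : ℝ) (hT : (N : ℝ) ≤ T)
    (H : Finset ℕ) (hH : H ⊆ range N) (hc : N ≤ K * H.card)
    (hg : ∀ h ∈ H, ∃ n : ℤ, |γ * h - n| * T ≤ K) :
    ∃ q : ℕ, 1 ≤ q ∧ q ≤ K ^ 6 ∧ ∃ a : ℤ, |q * γ - a| * (N * T) ≤ (K:ℝ) ^ 15 := by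
  have hK0 : 0 < K := by omega
  have hNpos : 0 < N := by nlinarith
  set W := N / (8 * K) with hW
  have hW1 : 8 * K * W ≤ N := Nat.mul_div_le _ _
  have hW2 : N < 8 * K * W + 8 * K := by
    have := Nat.lt_mul_div_succ N (show 0 < 8 * K by omega); rw [← hW] at this; linarith
  have hWpos : 0 < W := by
    by_contra h
    have : W = 0 := Nat.eq_zero_of_not_pos h
    rw [this] at hW2; nlinarith
  have hW3 : N ≤ 16 * K * W := by nlinarith
  -- pigeonhole into windows
  obtain ⟨b, hb, hbc⟩ := Finset.exists_le_card_fiber_of_nsmul_le_card_of_maps_to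
    (s := H) (t := range (16 * K + 1)) (f := fun h => h / W) (b := (N : ℝ) / (17 * K ^ 2))
    (by
      intro h hh
      have := mem_range.1 (hH hh)
      rw [mem_range, Nat.lt_succ_iff]
      apply Nat.le_of_lt_succ
      rw [Nat.div_lt_iff_lt_mul hWpos]
      nlinarith)
    ⟨0, by simp⟩
    (by
      rw [card_range, nsmul_eq_mul]
      have h1 : (N : ℝ) ≤ K * H.card := by exact_mod_cast hc
      have hK' : (2:ℝ) ≤ K := by exact_mod_cast hK
      push_cast
      rw [← mul_div_assoc, div_le_iff₀ (by positivity)]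
      have h2 : (16 * (K:ℝ) + 1) ≤ 17 * K := by linarith
      calc (16 * (K:ℝ) + 1) * N ≤ (17 * K) * (K * H.card) := by gcongr
        _ = _ := by ring)
  set H' := H.filter (fun h => h / W = b) with hH'
  have hKr : (2:ℝ) ≤ K := by exact_mod_cast hK
  have hNr : 40 * (K:ℝ) ^ 2 ≤ N := by exact_mod_cast hN
  have hbc' : (N:ℝ) ≤ 17 * K ^ 2 * H'.card := by
    rw [div_le_iff₀ (by positivity)] at hbc; linarith
  have hbcN : N ≤ 17 * K ^ 2 * H'.card := by exact_mod_cast hbc'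
  have hwin : ∀ h ∈ H', b * W ≤ h ∧ h < b * W + W := by
    intro h hh
    have := (mem_filter.1 hh).2
    constructor
    · rw [← this]; exact Nat.div_mul_le_self _ _
    · rw [← this]; have := Nat.lt_div_mul_add (a := h) hWpos; linarith
  have hcard3 : 3 ≤ H'.card := by
    by_contra h
    have : H'.card ≤ 2 := by omega
    have : 17 * K ^ 2 * H'.card ≤ 17 * K ^ 2 * 2 := Nat.mul_le_mul_left _ this
    have : 0 < K ^ 2 := by positivity
    omega
  have hne : H'.Nonempty := card_pos.1 (by omega)
  -- short pair
  obtain ⟨x, hx, y, hy, hxy, hfe⟩ := Finset.exists_ne_map_eq_of_card_lt_of_maps_to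
    (s := H') (t := range (W / (17 * K) + 1)) (f := fun h => (h - b * W) / (17 * K))
    (by
      rw [card_range]
      by_contra hcon
      push Not at hcon
      have h1 : 17 * K * (W / (17 * K)) ≤ W := Nat.mul_div_le _ _
      have h2 : 17 * K * H'.card ≤ W + 17 * K := by nlinarith
      have h3 : 8 * K * (17 * K * H'.card) ≤ 8 * K * (W + 17 * K) := Nat.mul_le_mul_left _ h2
      nlinarith)
    (by
      intro h hh
      have := hwin h hh
      rw [mem_coe, mem_range, Nat.lt_succ_iff]
      exact Nat.div_le_div_right (by omega))
  wlog hlt : x < y generalizing x y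
  · exact this y hy x hx hxy.symm hfe.symm (by omega)
  have hyx : y - x < 17 * K := by
    have h1 := hwin x hx
    have h2 := hwin y hy
    have h3 := Nat.div_mul_le_self (x - b * W) (17 * K)
    have h4 := Nat.lt_div_mul_add (a := y - b * W) (show 0 < 17 * K by omega)
    have hfe' : (x - b * W) / (17 * K) = (y - b * W) / (17 * K) := hfe
    rw [← hfe'] at h4
    omega
  set m := H'.min' hne
  set M := H'.max' hne
  have hm : m ∈ H' := min'_mem _ _
  have hM : M ∈ H' := max'_mem _ _
  have hmM : H'.card ≤ M + 1 - m := by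
    rw [← Nat.card_Icc]
    exact card_le_card fun h hh => mem_Icc.2 ⟨min'_le _ _ hh, le_max' _ _ hh⟩
  have hΔ : H'.card ≤ M - m + 1 := by omega
  have hmM' : m < M := by omega
  have hTpos : 0 < T := lt_of_lt_of_le (by exact_mod_cast hNpos) hT
  obtain ⟨nx, hnx⟩ := hg x (mem_filter.1 hx).1
  obtain ⟨ny, hny⟩ := hg y (mem_filter.1 hy).1
  obtain ⟨nm, hnm⟩ := hg m (mem_filter.1 hm).1
  obtain ⟨nM, hnM⟩ := hg M (mem_filter.1 hM).1
  obtain ⟨q, hq⟩ : ∃ q : ℕ, y = x + q := ⟨y - x, by omega⟩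
  obtain ⟨D, hD⟩ : ∃ D : ℕ, M = m + D := ⟨M - m, by omega⟩
  have hq1 : 1 ≤ q := by omega
  have hq2 : q ≤ 17 * K := by omega
  have hDW : D < W := by have := hwin m hm; have := hwin M hM; omega
  have hqW : q < W := by have := hwin x hx; have := hwin y hy; omega
  have e1 : |q * γ - (ny - nx : ℤ)| * T ≤ 2 * K := by
    have : q * γ - (ny - nx : ℤ) = (γ * y - ny) - (γ * x - nx) := by rw [hq]; push_cast; ring
    rw [this]
    have := abs_sub (γ * y - ny) (γ * x - nx)
    nlinarith
  have e2 : |D * γ - (nM - nm : ℤ)| * T ≤ 2 * K := by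
    have : D * γ - (nM - nm : ℤ) = (γ * M - nM) - (γ * m - nm) := by rw [hD]; push_cast; ring
    rw [this]
    have := abs_sub (γ * M - nM) (γ * m - nm)
    nlinarith
  set p := ny - nx
  set n := nM - nm
  have hdet : (D:ℤ) * p = q * n := by
    have hdr : ((D * p - q * n : ℤ) : ℝ) = q * (D * γ - n) - D * (q * γ - p) := by push_cast; ring
    have hb1 : |((D * p - q * n : ℤ) : ℝ)| * T ≤ q * (2 * K) + D * (2 * K) := by
      rw [hdr]
      have h1 := abs_sub (q * (D * γ - n)) (D * (q * γ - p))
      rw [abs_mul, abs_mul, Nat.abs_cast, Nat.abs_cast] at h1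
      have h2 : (q:ℝ) * (|D * γ - n| * T) ≤ q * (2 * K) := by gcongr
      have h3 : (D:ℝ) * (|q * γ - p| * T) ≤ D * (2 * K) := by gcongr
      nlinarith
    have hb2 : (q:ℝ) * (2 * K) + D * (2 * K) < T := by
      have h1 : (q:ℝ) + 1 ≤ W := by exact_mod_cast hqW
      have h2 : (D:ℝ) + 1 ≤ W := by exact_mod_cast hDW
      have h3 : 8 * (K:ℝ) * W ≤ N := by exact_mod_cast hW1
      nlinarith
    have hb3 : |((D * p - q * n : ℤ) : ℝ)| < 1 := by
      by_contra hcon; push Not at hcon; nlinarith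
    rw [← Int.cast_abs] at hb3
    have hb4 : |(D * p - q * n : ℤ)| < 1 := by exact_mod_cast hb3
    rw [Int.abs_lt_one_iff] at hb4
    omega
  refine ⟨q, hq1, ?_, p, ?_⟩
  · calc q ≤ 17 * K := hq2
      _ ≤ 2 ^ 5 * K := by omega
      _ ≤ K ^ 5 * K := by gcongr
      _ = K ^ 6 := by ring
  · have hdetr : (D:ℝ) * p = q * n := by exact_mod_cast hdet
    have h1 : D * |q * γ - p| = q * |D * γ - n| := by
      rw [← Nat.abs_cast D, ← Nat.abs_cast q, ← abs_mul, ← abs_mul, Nat.abs_cast, Nat.abs_cast]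
      congr 1
      linear_combination -hdetr
    have h2 : (N:ℝ) ≤ 34 * K ^ 2 * D := by
      have : (H'.card : ℝ) ≤ D + 1 := by
        have : H'.card ≤ D + 1 := by omega
        exact_mod_cast this
      have h17 : 17 * (K:ℝ)^2 * H'.card ≤ 17 * (K:ℝ)^2 * (D + 1) := by gcongr
      have hD1 : (1:ℝ) ≤ D := by
        have : 1 ≤ D := by omega
        exact_mod_cast this
      have : (K:ℝ)^2 * 1 ≤ K^2 * D := by gcongr
      linarith
    have h3 : (q:ℝ) ≤ 17 * K := by exact_mod_cast hq2
    calc |q * γ - p| * (N * T) ≤ |q * γ - p| * ((34 * K ^ 2 * D) * T) := by gcongr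
      _ = 34 * K ^ 2 * T * (D * |q * γ - p|) := by ring
      _ = 34 * K ^ 2 * q * (|D * γ - n| * T) := by rw [h1]; ring
      _ ≤ 34 * K ^ 2 * (17 * K) * (2 * K) := by gcongr
      _ = 1156 * K ^ 4 := by ring
      _ ≤ 2 ^ 11 * K ^ 4 := by gcongr; norm_num
      _ ≤ K ^ 11 * K ^ 4 := by gcongr
      _ = K ^ 15 := by ring

open Polynomial in
lemma diff_poly (k : ℕ) (f : ℝ[X]) (hf : f.natDegree ≤ k + 1) (h : ℝ) :
    (taylor h f - f).natDegree ≤ k ∧ (taylor h f - f).coeff k = (k + 1) * h * f.coeff (k + 1) := by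
  have hz : ∀ n, k + 1 < n → f.coeff n = 0 := fun n hn =>
    coeff_eq_zero_of_natDegree_lt (by omega)
  have hco : ∀ j, k ≤ j → (taylor h f).coeff j = f.coeff j + (j + 1) * f.coeff (j + 1) * h := by
    intro j hj
    rw [taylor_coeff]
    have hd : (hasseDeriv j f).natDegree < 2 := by
      have : (hasseDeriv j f).natDegree ≤ 1 := by
        rw [natDegree_le_iff_coeff_eq_zero]
        intro n hn
        rw [hasseDeriv_coeff, hz _ (by omega), mul_zero]
      omega
    rw [eval_eq_sum_range' hd, sum_range_succ, sum_range_succ, hasseDeriv_coeff, hasseDeriv_coeff]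
    simp [add_comm 1 j]
  constructor
  · rw [natDegree_le_iff_coeff_eq_zero]
    intro n hn
    rw [coeff_sub, hco n hn.le, hz (n + 1) (by omega)]; ring
  · rw [coeff_sub, hco k le_rfl]; ring

lemma triv_near (β : ℝ) (N R B : ℕ) (hB : N ^ R ≤ B) :
    |((1:ℕ) : ℝ) * β - (round β : ℤ)| * (N:ℝ) ^ R ≤ B := by
  have h1 : |((1:ℕ) : ℝ) * β - (round β : ℤ)| ≤ 1 := by
    have := abs_sub_round β; rw [Nat.cast_one, one_mul]; linarith
  have h2 : (N:ℝ) ^ R ≤ B := by exact_mod_cast hB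
  have h3 : (0:ℝ) ≤ (N:ℝ) ^ R := by positivity
  nlinarith

open Polynomial in
lemma lead_base (K N M : ℕ) (f : ℝ[X]) (hK : 2 ≤ K) (hf : f.natDegree ≤ 1)
    (hS : (N:ℝ) ≤ K * ‖∑ y ∈ range M, e (f.eval (y:ℝ))‖) :
    ∃ q : ℕ, 1 ≤ q ∧ q ≤ K ^ 1 ∧ ∃ a : ℤ, |q * f.coeff 1 - a| * (N:ℝ) ^ 1 ≤ (K:ℝ) ^ 1 := by
  refine ⟨1, le_rfl, by rw [pow_one]; omega, round (f.coeff 1), ?_⟩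
  set β := f.coeff 1
  have h1 : ∀ y ∈ range M, e (f.eval (y:ℝ)) = e (f.coeff 0) * e β ^ y := by
    intro y _
    rw [eval_eq_sum_range' (show f.natDegree < 2 by omega), sum_range_succ, sum_range_succ,
      ← e_nat_mul, ← e_add]
    simp [β, mul_comm]
  rw [sum_congr rfl h1, ← mul_sum, norm_mul, norm_e, one_mul] at hS
  have h2 := mul_geom_sum (e β) M
  have h3 : ‖e β - 1‖ * ‖∑ i ∈ range M, e β ^ i‖ ≤ 2 := by
    rw [← norm_mul, h2]
    refine (norm_sub_le _ _).trans ?_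
    rw [norm_pow, norm_e, norm_one]; norm_num
  have h4 := norm_e_sub_one_ge β
  rw [Nat.cast_one, one_mul, pow_one, pow_one]
  have h5 : 4 * |β - round β| * N ≤ ‖e β - 1‖ * (K * ‖∑ i ∈ range M, e β ^ i‖) := by
    gcongr
  have h6 : ‖e β - 1‖ * (K * ‖∑ i ∈ range M, e β ^ i‖) ≤ K * 2 := by
    calc _ = K * (‖e β - 1‖ * ‖∑ i ∈ range M, e β ^ i‖) := by ring
      _ ≤ _ := by gcongr
  have : (0:ℝ) ≤ K := Nat.cast_nonneg _
  linarith

set_option maxHeartbeats 1000000 in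
open Polynomial in
lemma lead (k : ℕ) : ∃ C : ℕ, ∀ (K N M : ℕ) (f : ℝ[X]), 2 ≤ K → M ≤ N → f.natDegree ≤ k + 1 →
    (N:ℝ) ≤ K * ‖∑ y ∈ range M, e (f.eval (y:ℝ))‖ →
    ∃ q : ℕ, 1 ≤ q ∧ q ≤ K ^ C ∧ ∃ a : ℤ,
      |q * f.coeff (k + 1) - a| * (N:ℝ) ^ (k + 1) ≤ (K:ℝ) ^ C := by
  induction k with
  | zero =>
    refine ⟨1, fun K N M f hK _ hf hS => ?_⟩
    simpa using lead_base K N M f hK hf hS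
  | succ k ih =>
    obtain ⟨C, ih⟩ := ih
    refine ⟨4 * (C + 1) * (8 * (k + 2) + 20), fun K N M f hK hMN hf hS => ?_⟩
    set K1 := K ^ 4 with hK1
    set K2 := K1 ^ (C + 1) with hK2
    have hK12 : 2 ≤ K1 := hK.trans (Nat.le_self_pow (by norm_num) K)
    have hK1big : 4 * K ^ 2 ≤ K1 := by
      have : 2 ^ 2 * K ^ 2 ≤ K ^ 2 * K ^ 2 := by gcongr
      calc 4 * K ^ 2 ≤ K ^ 2 * K ^ 2 := by simpa using this
        _ = K1 := by rw [hK1]; ring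
    have hK22 : 2 ≤ K2 := hK12.trans (Nat.le_self_pow (by omega) K1)
    have hKK2 : K ^ (4 * (C + 1) * (8 * (k + 2) + 20)) = K2 ^ (8 * (k + 2) + 20) := by
      rw [hK2, hK1, ← pow_mul, ← pow_mul, mul_assoc]
    rw [show (K:ℝ) ^ (4 * (C + 1) * (8 * (k + 2) + 20)) =
      ((K ^ (4 * (C + 1) * (8 * (k + 2) + 20)) : ℕ) : ℝ) by push_cast; rfl, hKK2]
    set R := 8 * (k + 2) + 20 with hR
    have hmono : ∀ i j, i ≤ j → K2 ^ i ≤ K2 ^ j := fun i j hij =>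
      Nat.pow_le_pow_right (by omega) hij
    rcases lt_or_ge N (40 * K2 ^ 2) with hsmall | hbig
    · have hN8 : N ≤ K2 ^ 8 := by
        calc N ≤ 40 * K2 ^ 2 := hsmall.le
          _ ≤ 2 ^ 6 * K2 ^ 2 := by omega
          _ ≤ K2 ^ 6 * K2 ^ 2 := by gcongr
          _ = K2 ^ 8 := by ring
      refine ⟨1, le_rfl, Nat.one_le_pow _ _ (by omega), _, triv_near _ N (k + 1 + 1) _ ?_⟩
      calc N ^ (k + 1 + 1) ≤ (K2 ^ 8) ^ (k + 1 + 1) := by gcongr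
        _ = K2 ^ (8 * (k + 2)) := by rw [← pow_mul]
        _ ≤ _ := hmono _ _ (by omega)
    have hNpos : 0 < N := by nlinarith
    have hNr : (0:ℝ) < N := by exact_mod_cast hNpos
    set Th : ℕ → ℝ := fun h => ‖∑ y ∈ range (M - h), e ((taylor (h:ℝ) f - f).eval (y:ℝ))‖ with hTh
    have hT_eq : ∀ h, Th h =
        ‖∑ y ∈ range (M - h), e (f.eval ((y + h : ℕ):ℝ)) * (starRingEnd ℂ) (e (f.eval (y:ℝ)))‖ := by
      intro h
      simp only [hTh]
      congr 1
      refine sum_congr rfl fun y _ => ?_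
      rw [conj_e, ← e_add, eval_sub, taylor_eval]; push_cast; rfl
    have hvdc := vdc (fun y => e (f.eval (y:ℝ))) (fun _ => norm_e _) M
    simp only [← hT_eq] at hvdc
    have hTle : ∀ h, Th h ≤ N := by
      intro h
      refine (norm_sum_le _ _).trans ?_
      simp only [norm_e, sum_const, card_range, nsmul_eq_mul, mul_one]
      exact_mod_cast (by omega : M - h ≤ N)
    classical
    set H := (range M).filter (fun h => (N:ℝ) ≤ K1 * Th h) with hH
    have hK1r : (0:ℝ) < K1 := by exact_mod_cast (by omega : 0 < K1)
    have hsum : ∑ h ∈ range M, Th h ≤ H.card * N + N * (N / K1) := by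
      rw [← sum_filter_add_sum_filter_not (range M) (fun h => (N:ℝ) ≤ K1 * Th h)]
      have a1 : ∑ h ∈ H, Th h ≤ H.card * N := by
        rw [← nsmul_eq_mul]; exact sum_le_card_nsmul _ _ _ fun h _ => hTle h
      have a2 : ∑ h ∈ (range M).filter (fun h => ¬ (N:ℝ) ≤ K1 * Th h), Th h ≤ N * (N / K1) := by
        have : ∑ h ∈ (range M).filter (fun h => ¬ (N:ℝ) ≤ K1 * Th h), Th h ≤
          ((range M).filter (fun h => ¬ (N:ℝ) ≤ K1 * Th h)).card * ((N:ℝ) / K1) := by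
          rw [← nsmul_eq_mul]
          refine sum_le_card_nsmul _ _ _ fun h hh => ?_
          have := (mem_filter.1 hh).2
          rw [le_div_iff₀ hK1r]; linarith
        refine this.trans ?_
        gcongr
        refine (card_filter_le _ _).trans ?_
        simpa using hMN
      exact add_le_add a1 a2
    have hHcard : N ≤ K1 * H.card := by
      have b1 : (N:ℝ) ^ 2 ≤ K ^ 2 * (2 * (H.card * N + N * (N / K1))) := by
        calc (N:ℝ) ^ 2 ≤ (K * ‖∑ y ∈ range M, e (f.eval (y:ℝ))‖) ^ 2 := by gcongr
          _ = K ^ 2 * ‖∑ y ∈ range M, e (f.eval (y:ℝ))‖ ^ 2 := by ring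
          _ ≤ K ^ 2 * (2 * ∑ h ∈ range M, Th h) := by gcongr
          _ ≤ _ := by gcongr
      have b2 : 4 * (K:ℝ) ^ 2 ≤ K1 := by exact_mod_cast hK1big
      have b3 : (K:ℝ) ^ 2 * (2 * (N * (N / K1))) ≤ N ^ 2 / 2 := by
        rw [show (K:ℝ) ^ 2 * (2 * (N * (N / K1))) = (4 * K ^ 2) * N ^ 2 / K1 / 2 by ring]
        gcongr
        rw [div_le_iff₀ hK1r]
        nlinarith [sq_nonneg (N:ℝ)]
      have b4 : (N:ℝ) * N ≤ N * (4 * K ^ 2 * H.card) := by nlinarith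
      have b5 : (N:ℝ) ≤ 4 * K ^ 2 * H.card := le_of_mul_le_mul_left b4 hNr
      have b6 : (N:ℝ) ≤ K1 * H.card := b5.trans (by gcongr)
      exact_mod_cast b6
    have hex : ∀ h ∈ H, ∃ q : ℕ, 1 ≤ q ∧ q ≤ K1 ^ C ∧ ∃ a : ℤ,
        |q * ((k + 2) * h * f.coeff (k + 2)) - a| * (N:ℝ) ^ (k + 1) ≤ (K1:ℝ) ^ C := by
      intro h hh
      have hd := diff_poly (k + 1) f hf (h:ℝ)
      have := ih K1 N (M - h) (taylor (h:ℝ) f - f) hK12 (by omega) hd.1 (mem_filter.1 hh).2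
      rw [hd.2] at this
      convert this using 8
      push_cast; ring
    choose! qf hq1 hq2 hqa using hex
    obtain ⟨q, hq, hqc⟩ := Finset.exists_le_card_fiber_of_nsmul_le_card_of_maps_to
      (s := H) (t := Icc 1 (K1 ^ C)) (f := qf) (b := (H.card : ℝ) / (K1:ℝ) ^ C)
      (fun h hh => mem_Icc.2 ⟨hq1 h hh, hq2 h hh⟩)
      ⟨1, mem_Icc.2 ⟨le_rfl, Nat.one_le_pow _ _ (by omega)⟩⟩
      (by
        rw [Nat.card_Icc, Nat.add_sub_cancel, nsmul_eq_mul]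
        push_cast
        rw [mul_div_cancel₀ _ (by positivity)])
    set H' := H.filter (fun h => qf h = q) with hH'
    have hH'c : N ≤ K2 * H'.card := by
      rw [div_le_iff₀ (by positivity)] at hqc
      have c1 : H.card ≤ H'.card * K1 ^ C := by exact_mod_cast hqc
      calc N ≤ K1 * H.card := hHcard
        _ ≤ K1 * (H'.card * K1 ^ C) := by gcongr
        _ = K2 * H'.card := by rw [hK2]; ring
    have hqI := mem_Icc.1 hq
    obtain ⟨q', hq'1, hq'2, a, ha⟩ := vino K2 N hK22 hbig ((N:ℝ) ^ (k + 1))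
      (q * ((k + 2) * f.coeff (k + 2)))
      (le_self_pow₀ (by exact_mod_cast hNpos) (by omega)) H'
      (fun h hh => by
        have := mem_range.1 (mem_filter.1 (mem_filter.1 hh).1).1
        exact mem_range.2 (by omega)) hH'c
      (by
        intro h hh
        obtain ⟨hhH, hhq⟩ := mem_filter.1 hh
        obtain ⟨a, ha⟩ := hqa h hhH
        rw [hhq] at ha
        refine ⟨a, ?_⟩
        have c2 : (K1:ℝ) ^ C ≤ K2 := by
          rw [hK2]; push_cast
          exact pow_le_pow_right₀ (by exact_mod_cast (by omega : 1 ≤ K1)) (by omega)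
        refine le_trans (le_of_eq ?_) (ha.trans c2)
        congr 3; ring)
    refine ⟨q' * q * (k + 2), ?_, ?_, a, ?_⟩
    · exact Nat.mul_pos (Nat.mul_pos hq'1 hqI.1) (by omega)
    · have d1 : k + 2 ≤ K2 ^ (k + 2) := Nat.lt_two_pow_self.le.trans (by gcongr)
      have d2 : q ≤ K2 := hqI.2.trans (Nat.pow_le_pow_right (by omega) (by omega))
      calc q' * q * (k + 2) ≤ K2 ^ 6 * K2 * K2 ^ (k + 2) := by gcongr
        _ = K2 ^ (k + 9) := by ring
        _ ≤ _ := hmono _ _ (by omega)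
    · have : (K2:ℝ) ^ 15 ≤ ((K2 ^ R : ℕ) : ℝ) := by exact_mod_cast hmono 15 R (by omega)
      refine le_trans (le_of_eq ?_) (ha.trans this)
      rw [pow_succ' (N:ℝ) (k + 1)]
      congr 3
      push_cast; ring

lemma abel_bound (u w : ℕ → ℂ) (v : ℕ → ℝ) (hw : ∀ n, ‖w n‖ ≤ 1)
    (hv : ∀ n, ‖w (n + 1) - w n‖ ≤ v n) (M : ℕ) (B : ℝ)
    (hB : ∀ m ≤ M, ‖∑ y ∈ range m, u y‖ ≤ B) :
    ‖∑ y ∈ range M, u y * w y‖ ≤ B * (1 + ∑ y ∈ range M, v y) := by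
  have hB0 : 0 ≤ B := (norm_nonneg _).trans (hB 0 (Nat.zero_le _))
  have key : ∀ m ≤ M, ‖∑ y ∈ range m, u y * w y - w m * ∑ y ∈ range m, u y‖ ≤
      B * ∑ y ∈ range m, v y := by
    intro m hm
    induction m with
    | zero => simp
    | succ m ih =>
      have h1 := ih (by omega)
      have h2 : ∑ y ∈ range (m + 1), u y * w y - w (m + 1) * ∑ y ∈ range (m + 1), u y =
          (∑ y ∈ range m, u y * w y - w m * ∑ y ∈ range m, u y) -
          (w (m + 1) - w m) * ∑ y ∈ range (m + 1), u y := by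
        rw [sum_range_succ, sum_range_succ]; ring
      rw [h2, sum_range_succ v, mul_add]
      refine (norm_sub_le _ _).trans (add_le_add h1 ?_)
      rw [norm_mul, mul_comm]
      exact mul_le_mul (hB _ hm) (hv m) (norm_nonneg _) hB0
  have h1 := key M le_rfl
  have h2 : ‖w M * ∑ y ∈ range M, u y‖ ≤ B := by
    rw [norm_mul]
    calc _ ≤ 1 * B := mul_le_mul (hw M) (hB M le_rfl) (norm_nonneg _) zero_le_one
      _ = B := one_mul B
  have h3 := norm_add_le (∑ y ∈ range M, u y * w y - w M * ∑ y ∈ range M, u y)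
    (w M * ∑ y ∈ range M, u y)
  rw [sub_add_cancel] at h3
  linarith

lemma orth (q : ℕ) (hq : 1 ≤ q) (y r : ℕ) (hr : r < q) :
    ∑ s ∈ range q, e (s * (((y:ℝ) - r) / q)) = if r = y % q then (q:ℂ) else 0 := by
  have hq0 : (q:ℝ) ≠ 0 := by positivity
  set t : ℝ := ((y:ℝ) - r) / q with ht
  have htq : q * t = ((y - r : ℤ) : ℝ) := by rw [ht]; push_cast; field_simp
  simp only [e_nat_mul]
  split_ifs with h
  · have : t = ((y / q : ℕ) : ℤ) := by
      rw [ht, div_eq_iff hq0, h]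
      have := Nat.mod_add_div y q
      have h2 : (y:ℝ) = (y % q : ℕ) + q * (y / q : ℕ) := by exact_mod_cast this.symm
      rw [Int.cast_natCast]
      linarith
    rw [this, e_int]; simp
  · have h1 := mul_geom_sum (e t) q
    rw [← e_nat_mul, htq, e_int, sub_self] at h1
    rcases mul_eq_zero.1 h1 with h2 | h2
    · exfalso
      have h3 := norm_e_sub_one_ge t
      rw [h2, norm_zero] at h3
      have h4 : |t - round t| = 0 := le_antisymm (by linarith) (abs_nonneg _)
      have h5 : t = round t := by rw [abs_eq_zero] at h4; linarith
      rw [h5] at htq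
      have h6 : (q:ℤ) * round t = (y:ℤ) - r := by exact_mod_cast htq
      apply h
      have h7 : (y:ℤ) % q = r := by
        rw [show (y:ℤ) = r + q * round t by linarith, Int.add_mul_emod_self_left]
        exact Int.emod_eq_of_lt (by positivity) (by exact_mod_cast hr)
      exact_mod_cast h7.symm
    · exact h2

lemma char_bound (q : ℕ) (hq : 1 ≤ q) (φ u : ℕ → ℂ) (hφ : ∀ y, φ y = φ (y % q))
    (hφ1 : ∀ y, ‖φ y‖ ≤ 1) (M : ℕ) (B : ℝ)
    (hB : ∀ s < q, ‖∑ y ∈ range M, u y * e (s * ((y:ℝ) / q))‖ ≤ B) :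
    ‖∑ y ∈ range M, u y * φ y‖ ≤ q * B := by
  have hq0 : (q:ℂ) ≠ 0 := by exact_mod_cast (by omega : q ≠ 0)
  have hB0 : 0 ≤ B := (norm_nonneg _).trans (hB 0 (by omega))
  have h1 : ∀ y, φ y = ∑ r ∈ range q, ∑ s ∈ range q, φ r / q * e (s * (((y:ℝ) - r) / q)) := by
    intro y
    have : ∀ r ∈ range q, ∑ s ∈ range q, φ r / q * e (s * (((y:ℝ) - r) / q)) =
        if r = y % q then φ r else 0 := by
      intro r hr
      rw [← mul_sum, orth q hq y r (mem_range.1 hr)]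
      split_ifs
      · field_simp
      · simp
    rw [sum_congr rfl this, sum_ite_eq' (range q) (y % q) φ,
      if_pos (mem_range.2 (Nat.mod_lt _ (by omega))), ← hφ]
  have h2 : ∑ y ∈ range M, u y * φ y = ∑ r ∈ range q, ∑ s ∈ range q,
      φ r / q * e (-(s * ((r:ℝ) / q))) * ∑ y ∈ range M, u y * e (s * ((y:ℝ) / q)) := by
    have : ∀ y ∈ range M, u y * φ y = ∑ r ∈ range q, ∑ s ∈ range q,
      φ r / q * e (-(s * ((r:ℝ) / q))) * (u y * e (s * ((y:ℝ) / q))) := by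
      intro y _
      rw [h1 y, mul_sum]
      refine sum_congr rfl fun r _ => ?_
      rw [mul_sum]
      refine sum_congr rfl fun s _ => ?_
      rw [show s * (((y:ℝ) - r) / q) = -(s * ((r:ℝ) / q)) + s * ((y:ℝ) / q) by ring, e_add]
      ring
    rw [sum_congr rfl this, sum_comm]
    refine sum_congr rfl fun r _ => ?_
    rw [sum_comm]
    refine sum_congr rfl fun s _ => ?_
    rw [mul_sum]
  rw [h2]
  refine (norm_sum_le _ _).trans ?_
  calc ∑ r ∈ range q, ‖∑ s ∈ range q,
      φ r / q * e (-(s * ((r:ℝ) / q))) * ∑ y ∈ range M, u y * e (s * ((y:ℝ) / q))‖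
      ≤ ∑ r ∈ range q, ∑ s ∈ range q, 1 / q * B := by
        refine sum_le_sum fun r _ => (norm_sum_le _ _).trans (sum_le_sum fun s hs => ?_)
        rw [norm_mul, norm_mul, norm_e, mul_one, norm_div, Complex.norm_natCast]
        gcongr
        · exact hφ1 r
        · exact hB s (mem_range.1 hs)
    _ = q * B := by
        have : (q:ℝ) ≠ 0 := by exact_mod_cast (by omega : q ≠ 0)
        simp only [sum_const, card_range, nsmul_eq_mul]; field_simp

set_option maxHeartbeats 1000000 in
open Polynomial in
lemma lin (k : ℕ) : ∃ C : ℕ, ∀ (K N M : ℕ) (f : ℝ[X]), 2 ≤ K → M ≤ N → f.natDegree ≤ k + 1 →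
    (N:ℝ) ≤ K * ‖∑ y ∈ range M, e (f.eval (y:ℝ))‖ →
    ∃ q : ℕ, 1 ≤ q ∧ q ≤ K ^ C ∧ ∃ a : ℤ,
      |q * f.coeff 1 - a| * (N:ℝ) ≤ (K:ℝ) ^ C := by
  induction k with
  | zero =>
    refine ⟨1, fun K N M f hK _ hf hS => ?_⟩
    simpa using lead_base K N M f hK hf hS
  | succ k ih =>
    obtain ⟨C, ih⟩ := ih
    obtain ⟨C1, hlead⟩ := lead (k + 1)
    refine ⟨C1 + (2 * C1 + 4) * C, fun K N M f hK hMN hf hS => ?_⟩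
    obtain ⟨q, hq1, hq2, a, ha⟩ := hlead K N M f hK hMN hf hS
    set β := f.coeff (k + 1 + 1) with hβ
    have hqr : (1:ℝ) ≤ q := by exact_mod_cast hq1
    have hq0 : (q:ℝ) ≠ 0 := by positivity
    have hKr : (2:ℝ) ≤ K := by exact_mod_cast hK
    set θ := β - a / q with hθ
    have hθN : |θ| * (N:ℝ) ^ (k + 2) ≤ (K:ℝ) ^ C1 := by
      refine le_trans (mul_le_mul_of_nonneg_right ?_ (by positivity)) ha
      rw [show q * β - a = q * θ by rw [hθ]; field_simp, abs_mul, Nat.abs_cast]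
      exact le_mul_of_one_le_left (abs_nonneg _) hqr
    set g := f - monomial (k + 2) β with hg
    have hgd : g.natDegree ≤ k + 1 := by
      rw [natDegree_le_iff_coeff_eq_zero]
      intro n hn
      rw [hg, coeff_sub, coeff_monomial]
      split_ifs with h
      · rw [← h, hβ]; exact sub_self _
      · rw [sub_zero]; exact coeff_eq_zero_of_natDegree_lt (by omega)
    have hg1 : g.coeff 1 = f.coeff 1 := by
      rw [hg, coeff_sub, coeff_monomial, if_neg (by omega), sub_zero]
    set u : ℕ → ℂ := fun y => e (g.eval (y:ℝ)) with hu
    set φ : ℕ → ℂ := fun y => e (a * (y:ℝ) ^ (k + 2) / q) with hφ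
    set w : ℕ → ℂ := fun y => e (θ * (y:ℝ) ^ (k + 2)) with hw
    have hsplit : ∀ y ∈ range M, e (f.eval (y:ℝ)) = u y * φ y * w y := by
      intro y _
      simp only [hu, hφ, hw]
      rw [← e_add, ← e_add, hg, eval_sub, eval_monomial, hθ]
      congr 1; ring
    rw [sum_congr rfl hsplit] at hS
    obtain ⟨M', hM', hmax⟩ := exists_max_image (range (M + 1))
      (fun m => ‖∑ y ∈ range m, u y * φ y‖) ⟨0, by simp⟩
    have hM'M : M' ≤ M := by simpa [Nat.lt_succ_iff] using hM'
    have hab := abel_bound (fun y => u y * φ y) w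
      (fun y => 2 * π * (|θ| * (((y + 1 : ℕ):ℝ) ^ (k + 2) - (y:ℝ) ^ (k + 2))))
      (fun n => (norm_e _).le)
      (by
        intro n
        simp only [hw]
        rw [show θ * ((n + 1 : ℕ):ℝ) ^ (k + 2) =
          θ * (n:ℝ) ^ (k + 2) + θ * (((n + 1 : ℕ):ℝ) ^ (k + 2) - (n:ℝ) ^ (k + 2)) by ring, e_add,
          ← mul_sub_one, norm_mul, norm_e, one_mul]
        refine (norm_e_sub_one_le _).trans (le_of_eq ?_)
        have hpos : (0:ℝ) ≤ ((n + 1 : ℕ):ℝ) ^ (k + 2) - (n:ℝ) ^ (k + 2) := by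
          rw [sub_nonneg]; gcongr; omega
        rw [abs_mul, abs_of_nonneg hpos])
      M _ (fun m hm => hmax m (mem_range.2 (by omega)))
    rw [← mul_sum, ← mul_sum, sum_range_sub (fun y => ((y:ℕ):ℝ) ^ (k + 2))] at hab
    have hV : 1 + 2 * π * (|θ| * (((M:ℕ):ℝ) ^ (k + 2) - ((0:ℕ):ℝ) ^ (k + 2))) ≤ (K:ℝ) ^ (C1 + 3) := by
      have h1 : |θ| * (((M:ℕ):ℝ) ^ (k + 2) - ((0:ℕ):ℝ) ^ (k + 2)) ≤ (K:ℝ) ^ C1 := by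
        refine le_trans ?_ hθN
        gcongr
        have : (M:ℝ) ^ (k + 2) ≤ (N:ℝ) ^ (k + 2) := by gcongr
        simpa using this
      have h2 : (1:ℝ) ≤ (K:ℝ) ^ C1 := one_le_pow₀ (by linarith)
      have h3 : 2 * π * (|θ| * (((M:ℕ):ℝ) ^ (k + 2) - ((0:ℕ):ℝ) ^ (k + 2))) ≤ 7 * (K:ℝ) ^ C1 := by
        have hp : 2 * π ≤ 7 := by linarith [Real.pi_lt_d2]
        have hp0 := Real.pi_pos
        calc _ ≤ 2 * π * (K:ℝ) ^ C1 := by gcongr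
          _ ≤ _ := by gcongr
      have h4 : (8:ℝ) ≤ (K:ℝ) ^ 3 := by
        calc (8:ℝ) = 2 ^ 3 := by norm_num
          _ ≤ _ := by gcongr
      have h5 : (8:ℝ) * (K:ℝ) ^ C1 ≤ (K:ℝ) ^ (C1 + 3) := by rw [pow_add]; nlinarith
      linarith
    obtain ⟨s, hs, hsmax⟩ := exists_max_image (range q)
      (fun s => ‖∑ y ∈ range M', u y * e (s * ((y:ℝ) / q))‖) ⟨0, mem_range.2 (by omega)⟩
    have hch := char_bound q hq1 φ u
      (by
        intro y
        simp only [hφ]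
        obtain ⟨m, hm⟩ : (q:ℤ) ∣ a * (y:ℤ) ^ (k + 2) - a * ((y % q : ℕ):ℤ) ^ (k + 2) := by
          rw [← mul_sub]
          refine Dvd.dvd.mul_left ?_ _
          refine dvd_trans ?_ (sub_dvd_pow_sub_pow _ _ _)
          refine ⟨(y / q : ℕ), ?_⟩
          have : (y:ℤ) = (y % q : ℕ) + q * (y / q : ℕ) := by exact_mod_cast (Nat.mod_add_div y q).symm
          linarith
        have hmr : (a:ℝ) * (y:ℝ) ^ (k + 2) - a * ((y % q : ℕ):ℝ) ^ (k + 2) = q * m := by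
          have := congrArg (Int.cast : ℤ → ℝ) hm
          push_cast at this ⊢
          exact this
        rw [show (a:ℝ) * (y:ℝ) ^ (k + 2) / q = a * ((y % q : ℕ):ℝ) ^ (k + 2) / q + m by
          field_simp; linarith, e_add_int])
      (fun y => (norm_e _).le) M' _ (fun s hs => hsmax s (mem_range.2 hs))
    set f' := g + Polynomial.C ((s:ℝ) / q) * X with hf'
    have hf'S : ∑ y ∈ range M', u y * e (s * ((y:ℝ) / q)) = ∑ y ∈ range M', e (f'.eval (y:ℝ)) := by
      refine sum_congr rfl fun y _ => ?_
      simp only [hu, hf']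
      rw [← e_add]
      congr 1
      simp; ring
    rw [hf'S] at hch
    set Z := ‖∑ y ∈ range M', e (f'.eval (y:ℝ))‖ with hZ
    have hZ0 : 0 ≤ Z := norm_nonneg _
    have hfin : (N:ℝ) ≤ ((K ^ (2 * C1 + 4) : ℕ):ℝ) * Z := by
      have hq2r : (q:ℝ) ≤ (K:ℝ) ^ C1 := by exact_mod_cast hq2
      calc (N:ℝ) ≤ K * ‖∑ y ∈ range M, u y * φ y * w y‖ := hS
        _ ≤ K * (‖∑ y ∈ range M', u y * φ y‖ * (K:ℝ) ^ (C1 + 3)) := by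
            gcongr; exact hab.trans (by gcongr)
        _ ≤ K * ((q * Z) * (K:ℝ) ^ (C1 + 3)) := by gcongr
        _ ≤ K * (((K:ℝ) ^ C1 * Z) * (K:ℝ) ^ (C1 + 3)) := by gcongr
        _ = _ := by push_cast; ring
    have hf'd : f'.natDegree ≤ k + 1 := by
      refine (natDegree_add_le _ _).trans (max_le hgd ?_)
      exact (natDegree_C_mul_le _ _).trans (natDegree_X_le.trans (by omega))
    have hf'1 : f'.coeff 1 = f.coeff 1 + s / q := by
      rw [hf', coeff_add, hg1, coeff_C_mul, coeff_X_one, mul_one]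
    obtain ⟨q', hq'1, hq'2, a', ha'⟩ := ih (K ^ (2 * C1 + 4)) N M' f'
      (hK.trans (Nat.le_self_pow (by omega) K)) (hM'M.trans hMN) hf'd hfin
    refine ⟨q * q', Nat.mul_pos hq1 hq'1, ?_, q * a' - q' * s, ?_⟩
    · rw [pow_add, pow_mul]
      exact Nat.mul_le_mul hq2 hq'2
    · rw [hf'1] at ha'
      have : ((q * q' : ℕ):ℝ) * f.coeff 1 - (q * a' - q' * s : ℤ) =
          q * (q' * (f.coeff 1 + s / q) - a') := by
        push_cast; field_simp; ring
      rw [this, abs_mul, Nat.abs_cast, pow_add, pow_mul, mul_assoc]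
      have hq2r : (q:ℝ) ≤ (K:ℝ) ^ C1 := by exact_mod_cast hq2
      push_cast at ha'
      gcongr

open Polynomial in
lemma expsum (α : ℝ) (hα : ¬ IsLiouvilleReal α) (k : ℕ) : ∃ D : ℕ, ∀ (K N : ℕ) (f : ℝ[X]) (h : ℤ),
    2 ≤ K → f.natDegree ≤ k + 1 → f.coeff 1 = α → h ≠ 0 → h.natAbs ≤ K → K ^ D < N →
    K * ‖∑ y ∈ range N, e (h * f.eval (y:ℝ))‖ < N := by
  obtain ⟨C0, hC⟩ := lin k
  unfold IsLiouvilleReal at hα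
  push Not at hα
  obtain ⟨n, hn⟩ := hα
  refine ⟨C0 + (C0 + 2) * n, fun K N f h hK hf hfα hh hhK hN => ?_⟩
  by_contra hcon
  push Not at hcon
  have hev : ∀ y ∈ range N, e (h * f.eval (y:ℝ)) = e ((C (h:ℝ) * f).eval (y:ℝ)) := by
    intro y _; rw [eval_mul, eval_C]
  rw [sum_congr rfl hev] at hcon
  obtain ⟨q, hq1, hq2, a, ha⟩ := hC K N N (C (h:ℝ) * f) hK le_rfl
    ((natDegree_C_mul_le _ _).trans hf) hcon
  rw [coeff_C_mul, hfα] at ha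
  set H := h.natAbs with hH
  have hH1 : 1 ≤ H := Int.natAbs_pos.2 hh
  have hHs : (h:ℝ) = h.sign * (H:ℝ) := by
    have := Int.sign_mul_natAbs h
    have h2 := congrArg (Int.cast : ℤ → ℝ) this
    rw [Int.cast_mul, Int.cast_natCast] at h2
    exact h2.symm
  have hss : (h.sign:ℝ) * h.sign = 1 := by
    rcases lt_or_gt_of_ne hh with h1 | h1
    · rw [Int.sign_eq_neg_one_of_neg h1]; norm_num
    · rw [Int.sign_eq_one_of_pos h1]; norm_num
  have habs : |(h.sign:ℝ)| = 1 := by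
    rcases lt_or_gt_of_ne hh with h1 | h1
    · rw [Int.sign_eq_neg_one_of_neg h1]; norm_num
    · rw [Int.sign_eq_one_of_pos h1]; norm_num
  have hqH : 1 ≤ q * H := Nat.mul_pos hq1 hH1
  have hqHr : (1:ℝ) ≤ q * H := by exact_mod_cast hqH
  have hqr : (1:ℝ) ≤ q := by exact_mod_cast hq1
  have hHr : (1:ℝ) ≤ H := by exact_mod_cast hH1
  have h1 := hn (2 * h.sign * a) ((2 * (q * H) : ℕ) : ℤ) (by exact_mod_cast (by omega))
  have h2 : |α - ((2 * h.sign * a : ℤ):ℝ) / (((2 * (q * H) : ℕ) : ℤ) : ℝ)| ≤ |q * (h * α) - a| := by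
    have : q * (h * α) - a = h.sign * ((q * H) *
        (α - ((2 * h.sign * a : ℤ):ℝ) / (((2 * (q * H) : ℕ) : ℤ) : ℝ))) := by
      push_cast
      rw [hHs]
      have : (q:ℝ) * H ≠ 0 := by positivity
      field_simp
      linear_combination (a:ℝ) * hss
    rw [this, abs_mul, abs_mul, habs, one_mul, abs_of_pos (by positivity : (0:ℝ) < q * H)]
    exact le_mul_of_one_le_left (abs_nonneg _) hqHr
  set Q : ℕ := 2 * (q * H) with hQ
  have hQpos : (0:ℝ) < (Q:ℝ) := by
    have : 0 < Q := by omega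
    exact_mod_cast this
  rw [Int.cast_natCast, zpow_neg, zpow_natCast] at h1
  rw [Int.cast_natCast] at h2
  have h3 : (N:ℝ) ≤ (K:ℝ) ^ C0 * (Q:ℝ) ^ n := by
    have h4 : ((Q:ℝ) ^ n)⁻¹ * N ≤ (K:ℝ) ^ C0 :=
      le_trans (mul_le_mul_of_nonneg_right (h1.le.trans h2) (Nat.cast_nonneg _)) ha
    rw [inv_mul_le_iff₀ (by positivity)] at h4
    linarith
  have h4 : N ≤ K ^ C0 * Q ^ n := by exact_mod_cast h3
  have h5 : Q ≤ K ^ (C0 + 2) := by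
    calc Q ≤ K * (K ^ C0 * K) := by rw [hQ]; gcongr
      _ = _ := by ring
  have h6 : N ≤ K ^ (C0 + (C0 + 2) * n) := by
    calc N ≤ K ^ C0 * (K ^ (C0 + 2)) ^ n := h4.trans (by gcongr)
      _ = _ := by rw [← pow_mul, ← pow_add]
  omega

lemma count_bound (K N : ℕ) (hK : 2 ≤ K) (u : ℕ → ℝ)
    (hu : ∀ h : ℤ, h ≠ 0 → h.natAbs ≤ K → K * ‖∑ y ∈ range N, e (h * u y)‖ ≤ N) :
    (((range N).filter fun y => Int.fract (u y) < 1 / (6 * K)).card : ℝ) * K ≤ 8 * N := by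
  set A := (range N).filter fun y => Int.fract (u y) < 1 / (6 * (K:ℝ)) with hA
  set F : ℕ → ℝ := fun y => ‖∑ h ∈ range K, e (h * u y)‖ ^ 2 with hF
  have hKr : (2:ℝ) ≤ K := by exact_mod_cast hK
  have hlow : ∀ y ∈ A, (K:ℝ) ^ 2 / 4 ≤ F y := by
    intro y hy
    have hy2 := (mem_filter.1 hy).2
    have hy0 := Int.fract_nonneg (u y)
    have h1 : (K:ℝ) / 2 ≤ (∑ h ∈ range K, e (h * u y)).re := by
      rw [Complex.re_sum]
      have : ∀ h ∈ range K, (1:ℝ) / 2 ≤ (e (h * u y)).re := by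
        intro h hh
        have hhK : (h:ℝ) ≤ K := by exact_mod_cast (mem_range.1 hh).le
        have he : e (h * u y) = e (h * Int.fract (u y)) := by
          conv_lhs => rw [← Int.fract_add_floor (u y), mul_add]
          rw [show (h:ℝ) * (⌊u y⌋:ℝ) = ((h * ⌊u y⌋ : ℤ) : ℝ) by push_cast; ring, e_add_int]
        rw [he]
        unfold e
        rw [mul_comm, Complex.exp_ofReal_mul_I_re, ← Real.cos_pi_div_three]
        apply Real.cos_le_cos_of_nonneg_of_le_pi
        · have := Real.pi_pos; positivity
        · have := Real.pi_pos; linarith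
        · have h3 : (h:ℝ) * Int.fract (u y) ≤ 1 / 6 := by
            calc (h:ℝ) * Int.fract (u y) ≤ K * (1 / (6 * K)) := by gcongr
              _ = 1 / 6 := by field_simp
          have := Real.pi_pos
          nlinarith
      have h2 := card_nsmul_le_sum _ _ _ this
      rw [card_range, nsmul_eq_mul] at h2
      linarith
    have h2 := h1.trans (Complex.re_le_norm _)
    simp only [hF]
    nlinarith
  have hsum : ∑ y ∈ range N, F y ≤ 2 * K * N := by
    have h1 : ((∑ y ∈ range N, F y : ℝ) : ℂ) =
        ∑ h ∈ range K, ∑ h' ∈ range K, ∑ y ∈ range N, e (((h:ℤ) - (h':ℤ) : ℤ) * u y) := by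
      push_cast
      have : ∀ y ∈ range N, ((F y : ℝ) : ℂ) =
          ∑ h ∈ range K, ∑ h' ∈ range K, e (((h:ℤ) - (h':ℤ) : ℤ) * u y) := by
        intro y _
        simp only [hF]
        rw [← Complex.normSq_eq_norm_sq, ← Complex.mul_conj, map_sum, sum_mul_sum]
        refine sum_congr rfl fun h _ => sum_congr rfl fun h' _ => ?_
        rw [conj_e, ← e_add]; congr 1; push_cast; ring
      rw [sum_congr rfl this, sum_comm]
      refine sum_congr rfl fun h _ => ?_
      rw [sum_comm]
      push_cast
      rfl
    have h2 : ∑ y ∈ range N, F y = ‖((∑ y ∈ range N, F y : ℝ) : ℂ)‖ := by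
      rw [Complex.norm_real, Real.norm_eq_abs, abs_of_nonneg]
      exact sum_nonneg fun y _ => by simp only [hF]; positivity
    rw [h2, h1]
    have h3 : ∀ h ∈ range K, ∀ h' ∈ range K,
        ‖∑ y ∈ range N, e (((h:ℤ) - (h':ℤ) : ℤ) * u y)‖ ≤ (if h = h' then (N:ℝ) else 0) + N / K := by
      intro h hh h' hh'
      have hhK := mem_range.1 hh
      have hhK' := mem_range.1 hh'
      split_ifs with heq
      · refine (norm_sum_le _ _).trans ?_
        simp only [norm_e, sum_const, card_range, nsmul_eq_mul, mul_one]
        have : (0:ℝ) ≤ N / K := by positivity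
        linarith
      · rw [zero_add, le_div_iff₀ (by linarith), mul_comm]
        exact hu _ (by omega) (by omega)
    calc _ ≤ ∑ h ∈ range K, ∑ h' ∈ range K, ((if h = h' then (N:ℝ) else 0) + N / K) := by
          refine (norm_sum_le _ _).trans (sum_le_sum fun h hh => (norm_sum_le _ _).trans
            (sum_le_sum fun h' hh' => h3 h hh h' hh'))
      _ = 2 * K * N := by
          have : ∀ h ∈ range K, ∑ h' ∈ range K, ((if h = h' then (N:ℝ) else 0) + N / K) = 2 * N := by
            intro h hh
            rw [sum_add_distrib, sum_ite_eq, if_pos hh, sum_const, card_range, nsmul_eq_mul]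
            field_simp; ring
          rw [sum_congr rfl this, sum_const, card_range, nsmul_eq_mul]; ring
  have h1 : (A.card:ℝ) * ((K:ℝ) ^ 2 / 4) ≤ 2 * K * N := by
    rw [← nsmul_eq_mul]
    refine (card_nsmul_le_sum _ _ _ hlow).trans (le_trans ?_ hsum)
    exact sum_le_sum_of_subset_of_nonneg (filter_subset _ _)
      fun y _ _ => sq_nonneg _
  have h2 : (K:ℝ) * (A.card * K) ≤ K * (8 * N) := by nlinarith
  exact le_of_mul_le_mul_left h2 (by linarith)

open AddCircle MeasureTheory Filter Topology in
lemma weyl_cont (u : ℕ → ℝ)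
    (hu : ∀ h : ℤ, h ≠ 0 → Tendsto (fun N : ℕ => (∑ y ∈ range N, e (h * u y)) / N) atTop (𝓝 0))
    (g : C(AddCircle (1:ℝ), ℂ)) :
    Tendsto (fun N : ℕ => (∑ y ∈ range N, g (u y : AddCircle (1:ℝ))) / (N:ℂ)) atTop
      (𝓝 (∫ x, g x ∂(volume : Measure (AddCircle (1:ℝ))))) := by
  have hvol : (volume : Measure (AddCircle (1:ℝ))) Set.univ = 1 := by
    rw [AddCircle.measure_univ]; simp
  have : IsProbabilityMeasure (volume : Measure (AddCircle (1:ℝ))) := ⟨hvol⟩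
  have hIntg : ∀ g : C(AddCircle (1:ℝ), ℂ), Integrable g (volume : Measure (AddCircle (1:ℝ))) :=
    fun g => g.continuous.integrable_of_hasCompactSupport (HasCompactSupport.of_compactSpace _)
  have hspan : ∀ g ∈ Submodule.span ℂ (Set.range (@fourier (1:ℝ))),
      Tendsto (fun N : ℕ => (∑ y ∈ range N, g (u y : AddCircle (1:ℝ))) / (N:ℂ)) atTop
      (𝓝 (∫ x, g x ∂(volume : Measure (AddCircle (1:ℝ))))) := by
    intro g hg
    induction hg using Submodule.span_induction with
    | mem g hg =>
      obtain ⟨n, rfl⟩ := hg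
      have hI : ∫ x, fourier n x ∂(volume : Measure (AddCircle (1:ℝ))) = if n = 0 then 1 else 0 := by
        have h1 := congrFun (fourierCoeff_fourier (T := 1) n) 0
        rw [fourierCoeff] at h1
        simp only [neg_zero, fourier_zero, one_smul] at h1
        rw [volume_eq_smul_haarAddCircle]
        simp only [ENNReal.ofReal_one, one_smul]
        rw [h1, Pi.single_apply]
        simp [eq_comm]
      rw [hI]
      split_ifs with hn
      · subst hn
        simp only [fourier_zero, sum_const, card_range, nsmul_eq_mul, mul_one]
        refine tendsto_const_nhds.congr' ?_
        filter_upwards [eventually_gt_atTop 0] with N hN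
        rw [div_self]; exact_mod_cast hN.ne'
      · refine (hu n hn).congr fun N => ?_
        congr 1
        refine sum_congr rfl fun y _ => ?_
        rw [fourier_coe_apply, e]
        congr 1; push_cast; ring
    | zero => simp
    | add f g _ _ hf hg =>
      simp only [ContinuousMap.add_apply]
      rw [integral_add (hIntg f) (hIntg g)]
      refine (hf.add hg).congr fun N => ?_
      rw [sum_add_distrib, add_div]
    | smul a f _ hf =>
      simp only [ContinuousMap.smul_apply, smul_eq_mul]
      rw [integral_const_mul]
      refine (hf.const_mul a).congr fun N => ?_
      rw [← mul_sum, mul_div_assoc]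
  rw [Metric.tendsto_atTop]
  intro ε hε
  have hmem : g ∈ (Submodule.span ℂ (Set.range (@fourier (1:ℝ)))).topologicalClosure := by
    rw [span_fourier_closure_eq_top]; trivial
  obtain ⟨f, hf, hfg⟩ := Metric.mem_closure_iff.1 hmem (ε/3) (by positivity)
  obtain ⟨N0, hN0⟩ := Metric.tendsto_atTop.1 (hspan f hf) (ε/3) (by positivity)
  refine ⟨N0 + 1, fun N hN => ?_⟩
  have h1 := hN0 N (by omega)
  have hpt : ∀ x, ‖g x - f x‖ ≤ dist g f := fun x => by
    rw [← dist_eq_norm]; exact ContinuousMap.dist_apply_le_dist x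
  have hNp : (0:ℝ) < N := by exact_mod_cast (by omega : 0 < N)
  have h2 : dist ((∑ y ∈ range N, g (u y : AddCircle (1:ℝ))) / (N:ℂ))
      ((∑ y ∈ range N, f (u y : AddCircle (1:ℝ))) / (N:ℂ)) ≤ dist g f := by
    rw [dist_eq_norm, ← sub_div, ← sum_sub_distrib, norm_div, Complex.norm_natCast,
      div_le_iff₀ hNp]
    refine (norm_sum_le _ _).trans ?_
    refine (sum_le_card_nsmul _ _ _ fun y _ => hpt _).trans ?_
    rw [card_range, nsmul_eq_mul, mul_comm]
  have h3 : dist (∫ x, f x ∂(volume : Measure (AddCircle (1:ℝ))))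
      (∫ x, g x ∂(volume : Measure (AddCircle (1:ℝ)))) ≤ dist g f := by
    rw [dist_comm, dist_eq_norm, ← integral_sub (hIntg g) (hIntg f)]
    refine (norm_integral_le_of_norm_le_const (Eventually.of_forall hpt)).trans ?_
    simp [measureReal_def, hvol]
  calc _ ≤ _ := dist_triangle4 _ _ _ _
    _ < ε := by linarith

open AddCircle MeasureTheory Filter Topology in
lemma weyl_arc (u : ℕ → ℝ)
    (hu : ∀ h : ℤ, h ≠ 0 → Tendsto (fun N : ℕ => (∑ y ∈ range N, e (h * u y)) / N) atTop (𝓝 0))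
    (a b ε : ℝ) (hab : a ≤ b) (hab1 : b ≤ a + 1) (hε : 0 < ε) :
    ∀ᶠ N : ℕ in atTop,
      (((range N).filter fun y => a ≤ Int.fract (u y) ∧ Int.fract (u y) < b).card : ℝ)
        ≤ (b - a + ε) * N := by
  set F : Set (AddCircle (1:ℝ)) :=
    Metric.closedBall (((a + b) / 2 : ℝ) : AddCircle (1:ℝ)) ((b - a) / 2) with hF
  have hFv : volume F = ENNReal.ofReal (b - a) := by
    rw [hF, AddCircle.volume_closedBall]; congr 1
    rw [min_eq_right] <;> linarith
  obtain ⟨U, hFU, hUo, hUv⟩ := Set.exists_isOpen_lt_add F (μ := volume) (by rw [hFv]; simp)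
    (ε := ENNReal.ofReal (ε / 2)) (by simpa using hε)
  have hUr : volume.real U ≤ b - a + ε / 2 := by
    rw [hFv, ← ENNReal.ofReal_add (by linarith) (by linarith)] at hUv
    rw [measureReal_def]
    exact ENNReal.toReal_le_of_le_ofReal (by linarith) hUv.le
  obtain ⟨g, hg0, hg1, hg⟩ := exists_continuous_zero_one_of_isClosed (s := Uᶜ) (t := F)
    hUo.isClosed_compl Metric.isClosed_closedBall
    (Set.disjoint_left.2 fun x hx hx2 => hx (hFU hx2))
  let G : C(AddCircle (1:ℝ), ℂ) := ⟨fun x => (g x : ℂ), by fun_prop⟩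
  have hw := weyl_cont u hu G
  have hGi : ∫ x, G x ∂(volume : Measure (AddCircle (1:ℝ))) =
      ((∫ x, g x ∂(volume : Measure (AddCircle (1:ℝ))) : ℝ) : ℂ) := integral_ofReal
  have hI : ∫ x, g x ∂(volume : Measure (AddCircle (1:ℝ))) ≤ b - a + ε / 2 := by
    refine le_trans ?_ hUr
    rw [← integral_indicator_one hUo.measurableSet]
    refine integral_mono
      (g.continuous.integrable_of_hasCompactSupport (HasCompactSupport.of_compactSpace _))
      ((integrable_const (1:ℝ)).indicator hUo.measurableSet) fun x => ?_
    by_cases hx : x ∈ U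
    · simp only [Set.indicator_of_mem hx, Pi.one_apply]; exact (hg x).2
    · simp only [Set.indicator_of_notMem hx]; exact (hg0 hx).le
  rw [hGi] at hw
  have hw2 : Tendsto (fun N : ℕ => (∑ y ∈ range N, g (u y : AddCircle (1:ℝ))) / (N:ℝ)) atTop
      (𝓝 (∫ x, g x ∂(volume : Measure (AddCircle (1:ℝ))))) := by
    have := (Complex.continuous_re.tendsto _).comp hw
    rw [Complex.ofReal_re] at this
    refine this.congr fun N => ?_
    simp only [Function.comp, G, ContinuousMap.coe_mk]
    rw [← Complex.ofReal_sum, ← Complex.ofReal_natCast, ← Complex.ofReal_div, Complex.ofReal_re]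
  have hlt := hw2.eventually (gt_mem_nhds (show _ < b - a + ε by linarith))
  filter_upwards [hlt, eventually_gt_atTop 0] with N hN hNp
  have hNr : (0:ℝ) < N := by exact_mod_cast hNp
  rw [div_lt_iff₀ hNr] at hN
  refine le_trans ?_ hN.le
  rw [card_filter]
  push_cast
  refine sum_le_sum fun y _ => ?_
  split_ifs with hy
  · have hmem : (u y : AddCircle (1:ℝ)) ∈ F := by
      have : (u y : AddCircle (1:ℝ)) = ((Int.fract (u y) : ℝ) : AddCircle (1:ℝ)) := by
        conv_lhs => rw [← Int.fract_add_floor (u y)]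
        rw [AddCircle.coe_add, show ((⌊u y⌋ : ℝ)) = ⌊u y⌋ • (1:ℝ) by simp, AddCircle.coe_zsmul,
          AddCircle.coe_period, smul_zero, add_zero]
      rw [this, hF, Metric.mem_closedBall, dist_eq_norm, ← AddCircle.coe_sub]
      refine le_trans (QuotientAddGroup.norm_mk_le_norm) ?_
      rw [Real.norm_eq_abs, abs_le]
      constructor <;> linarith [hy.1, hy.2]
    rw [hg1 hmem]; simp
  · exact (hg _).1

open Filter Topology in
lemma weyl_frac (u : ℕ → ℝ)
    (hu : ∀ h : ℤ, h ≠ 0 → Tendsto (fun N : ℕ => (∑ y ∈ range N, e (h * u y)) / N) atTop (𝓝 0))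
    (b : ℝ) (hb : 0 ≤ b) (hb1 : b ≤ 1) :
    Tendsto (fun N : ℕ => (((range N).filter fun y => Int.fract (u y) < b).card : ℝ) / N)
      atTop (𝓝 b) := by
  rw [Metric.tendsto_atTop']
  intro ε hε
  have h1 := weyl_arc u hu 0 b (ε/2) hb (by linarith) (by linarith)
  have h2 := weyl_arc u hu b 1 (ε/2) hb1 (by linarith) (by linarith)
  obtain ⟨N0, hN0⟩ := eventually_atTop.1 (h1.and h2)
  refine ⟨N0, fun N hN => ?_⟩
  obtain ⟨h1, h2⟩ := hN0 N hN.le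
  have hNr : (0:ℝ) < N := by exact_mod_cast (by omega : 0 < N)
  have e1 : ((range N).filter fun y => 0 ≤ Int.fract (u y) ∧ Int.fract (u y) < b) =
      (range N).filter fun y => Int.fract (u y) < b :=
    filter_congr fun y _ => by simp [Int.fract_nonneg]
  have e2 : ((range N).filter fun y => b ≤ Int.fract (u y) ∧ Int.fract (u y) < 1) =
      (range N).filter fun y => ¬ Int.fract (u y) < b :=
    filter_congr fun y _ => by simp [Int.fract_lt_one]
  rw [e1] at h1
  rw [e2] at h2
  have h3 := card_filter_add_card_filter_not (s := range N) (fun y => Int.fract (u y) < b)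
  rw [card_range] at h3
  have h3' : ((((range N).filter fun y => Int.fract (u y) < b).card : ℝ)) +
     ((range N).filter fun y => ¬ Int.fract (u y) < b).card = N := by exact_mod_cast h3
  rw [Real.dist_eq, abs_lt]
  constructor
  · rw [lt_sub_iff_add_lt, lt_div_iff₀ hNr]; nlinarith
  · rw [sub_lt_iff_lt_add, div_lt_iff₀ hNr]; nlinarith

/-- The polynomial `P(dx)/d`. -/
noncomputable def fd (P : Polynomial ℝ) (d : ℕ) : Polynomial ℝ :=
  Polynomial.C (1 / (d:ℝ)) * P.comp (Polynomial.C (d:ℝ) * Polynomial.X)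

lemma fd_eval (P : Polynomial ℝ) (d : ℕ) (y : ℝ) : (fd P d).eval y = P.eval (d * y) / d := by
  simp [fd]; ring

lemma fd_deg (P : Polynomial ℝ) (d : ℕ) : (fd P d).natDegree ≤ P.natDegree + 1 := by
  refine (Polynomial.natDegree_C_mul_le _ _).trans ?_
  refine Polynomial.natDegree_comp_le.trans ?_
  have := Polynomial.natDegree_C_mul_X_pow_le (d:ℝ) 1
  rw [pow_one] at this
  nlinarith

lemma fd_coeff (P : Polynomial ℝ) (d : ℕ) (hd : 1 ≤ d) : (fd P d).coeff 1 = P.coeff 1 := by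
  have : (d:ℝ) ≠ 0 := by positivity
  rw [fd, Polynomial.coeff_C_mul, Polynomial.comp_C_mul_X_coeff]
  field_simp

lemma dvd_floor (d : ℕ) (hd : 1 ≤ d) (t : ℝ) : (d:ℤ) ∣ ⌊t⌋ ↔ Int.fract (t / d) < 1 / d := by
  have hdr : (0:ℝ) < d := by exact_mod_cast hd
  constructor
  · rintro ⟨m, hm⟩
    have h1 := Int.floor_le t
    have h2 := Int.lt_floor_add_one t
    rw [hm] at h1 h2
    push_cast at h1 h2
    have hf : ⌊t / d⌋ = m := by
      rw [Int.floor_eq_iff]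
      constructor
      · rw [le_div_iff₀ hdr]; linarith
      · rw [div_lt_iff₀ hdr]
        have : (1:ℝ) ≤ d := by exact_mod_cast hd
        nlinarith
    rw [Int.fract, hf, sub_lt_iff_lt_add, div_lt_iff₀ hdr, add_mul, one_div, inv_mul_cancel₀ hdr.ne']
    linarith
  · intro h
    have h0 := Int.fract_nonneg (t / d)
    refine ⟨⌊t / d⌋, ?_⟩
    rw [Int.floor_eq_iff]
    rw [Int.fract, sub_lt_iff_lt_add, div_lt_iff₀ hdr, add_mul, one_div,
      inv_mul_cancel₀ hdr.ne'] at h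
    rw [Int.fract, sub_nonneg, le_div_iff₀ hdr] at h0
    push_cast
    constructor <;> linarith

lemma AP_card (P : Polynomial ℝ) (d : ℕ) (hd : 1 ≤ d) (X : ℝ) :
    (AP P d X).card ≤ ((range (⌊X⌋₊ / d + 1)).filter
        fun y : ℕ => Int.fract ((fd P d).eval (y:ℝ)) < 1 / d).card ∧
    ((range (⌊X⌋₊ / d + 1)).filter
        fun y : ℕ => Int.fract ((fd P d).eval (y:ℝ)) < 1 / d).card ≤ (AP P d X).card + 1 := by
  classical
  have key : (AP P d X) = (((range (⌊X⌋₊ / d + 1)).filter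
        fun y : ℕ => Int.fract ((fd P d).eval (y:ℝ)) < 1 / d).erase 0).image (fun y => d * y) := by
    ext x
    simp only [AP, mem_filter, mem_Icc, mem_image, mem_erase, mem_range]
    constructor
    · rintro ⟨⟨h1, h2⟩, h3, h4⟩
      obtain ⟨y, rfl⟩ := Int.natCast_dvd_natCast.1 h3
      refine ⟨y, ⟨by rintro rfl; simp at h1, ?_, ?_⟩, rfl⟩
      · rw [Nat.lt_succ_iff, Nat.le_div_iff_mul_le (by omega)]; linarith
      · rw [fd_eval, ← dvd_floor d hd]; exact_mod_cast h4
    · rintro ⟨y, ⟨h1, h2, h3⟩, rfl⟩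
      rw [Nat.lt_succ_iff, Nat.le_div_iff_mul_le (by omega)] at h2
      rw [fd_eval, ← dvd_floor d hd] at h3
      refine ⟨⟨Nat.mul_pos hd (by omega), by linarith⟩, by simp, ?_⟩
      push_cast; exact h3
  rw [key, card_image_of_injective]
  · exact ⟨card_erase_le, by have := pred_card_le_card_erase (s := ((range (⌊X⌋₊ / d + 1)).filter
        fun y : ℕ => Int.fract ((fd P d).eval (y:ℝ)) < 1 / d)) (a := 0); omega⟩
  · intro a b h; exact Nat.eq_of_mul_eq_mul_left hd h

open Filter Topology in
lemma AP_tendsto (P : Polynomial ℝ) (hP : ¬ IsLiouvilleReal (P.coeff 1)) (d : ℕ) (hd : 1 ≤ d) :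
    Tendsto (fun X : ℝ => ((AP P d X).card : ℝ) / X) atTop (𝓝 (1 / (d:ℝ) ^ 2)) := by
  have hdr : (0:ℝ) < d := by exact_mod_cast hd
  obtain ⟨D, hD⟩ := expsum _ hP P.natDegree
  have hu : ∀ h : ℤ, h ≠ 0 →
      Tendsto (fun N : ℕ => (∑ y ∈ range N, e (h * (fd P d).eval (y:ℝ))) / (N:ℂ)) atTop (𝓝 0) := by
    intro h hh
    rw [Metric.tendsto_atTop]
    intro ε hε
    obtain ⟨K0, hK0⟩ := exists_nat_gt (1 / ε)
    set K := K0 + 2 + h.natAbs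
    refine ⟨K ^ D + 1, fun N hN => ?_⟩
    have := hD K N (fd P d) h (by omega) (fd_deg P d) (fd_coeff P d hd) hh (by omega) (by omega)
    have hNr : (0:ℝ) < N := by exact_mod_cast (by omega : 0 < N)
    rw [dist_zero_right, norm_div, Complex.norm_natCast, div_lt_iff₀ hNr]
    have hKr : 1 / ε < K := hK0.trans_le (by exact_mod_cast (by omega))
    rw [div_lt_iff₀ hε] at hKr
    have hK0 : (0:ℝ) < K := by exact_mod_cast (by omega : 0 < K)
    have h5 : (K:ℝ) * ‖∑ y ∈ range N, e (h * (fd P d).eval (y:ℝ))‖ < K * (ε * N) := by nlinarith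
    exact lt_of_mul_lt_mul_left h5 hK0.le
  have hdone : (1:ℝ) ≤ d := by exact_mod_cast hd
  have hw := weyl_frac _ hu (1 / d) (by positivity) (by rw [div_le_one hdr]; exact hdone)
  have hM : Tendsto (fun X : ℝ => ⌊X⌋₊ / d + 1) atTop atTop := by
    exact tendsto_atTop_mono (fun X => Nat.le_succ _)
      ((Nat.tendsto_div_const_atTop (by omega)).comp tendsto_nat_floor_atTop)
  have hMX : Tendsto (fun X : ℝ => ((⌊X⌋₊ / d + 1 : ℕ) : ℝ) / X) atTop (𝓝 (1 / d)) := by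
    have hinv : Tendsto (fun X : ℝ => 1 / X) atTop (𝓝 0) := by
      simpa using tendsto_inv_atTop_zero (𝕜 := ℝ)
    have hup : Tendsto (fun X : ℝ => 1 / (d:ℝ) + 1 / X) atTop (𝓝 (1 / d)) := by
      simpa using hinv.const_add (1 / (d:ℝ))
    have hlo : Tendsto (fun X : ℝ => 1 / (d:ℝ) - 1 / X) atTop (𝓝 (1 / d)) := by
      simpa using hinv.const_sub (1 / (d:ℝ))
    refine tendsto_of_tendsto_of_tendsto_of_le_of_le' hlo hup ?_ ?_
    · filter_upwards [eventually_gt_atTop 0] with X hX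
      have h1 := Nat.lt_floor_add_one X
      have h2 : ⌊X⌋₊ < d * (⌊X⌋₊ / d + 1) := Nat.lt_mul_div_succ _ hd
      have h2' : (⌊X⌋₊:ℝ) + 1 ≤ d * ((⌊X⌋₊ / d + 1 : ℕ):ℝ) := by exact_mod_cast h2
      rw [le_div_iff₀ hX, sub_mul, one_div_mul_cancel hX.ne', sub_le_iff_le_add, one_div,
        inv_mul_le_iff₀ hdr]
      nlinarith
    · filter_upwards [eventually_gt_atTop 0] with X hX
      have h1 := Nat.floor_le hX.le
      have h2 : d * (⌊X⌋₊ / d) ≤ ⌊X⌋₊ := Nat.mul_div_le _ _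
      have h2' : (d:ℝ) * ((⌊X⌋₊ / d : ℕ):ℝ) ≤ ⌊X⌋₊ := by exact_mod_cast h2
      rw [div_le_iff₀ hX, add_mul, one_div_mul_cancel hX.ne']
      rw [Nat.cast_add, Nat.cast_one]
      have : ((⌊X⌋₊ / d : ℕ):ℝ) ≤ 1 / d * X := by
        rw [one_div, ← div_eq_inv_mul, le_div_iff₀ hdr]; linarith
      linarith
  have hmain := (hw.comp hM).mul hMX
  have hinv : Tendsto (fun X : ℝ => 1 / X) atTop (𝓝 0) := by
    simpa using tendsto_inv_atTop_zero (𝕜 := ℝ)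
  have heq : (1 / (d:ℝ)) * (1 / d) = 1 / (d:ℝ) ^ 2 := by field_simp
  rw [heq] at hmain
  have hlo := hmain.sub hinv
  rw [sub_zero] at hlo
  refine tendsto_of_tendsto_of_tendsto_of_le_of_le' hlo hmain ?_ ?_
  · filter_upwards [eventually_gt_atTop 0] with X hX
    have hA := (AP_card P d hd X).2
    have hMp : ((⌊X⌋₊ / d + 1 : ℕ) : ℝ) ≠ 0 := by positivity
    simp only [Function.comp]
    rw [div_mul_div_cancel₀ hMp, ← sub_div]
    gcongr
    rw [sub_le_iff_le_add]
    exact_mod_cast hA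
  · filter_upwards [eventually_gt_atTop 0] with X hX
    have hA := (AP_card P d hd X).1
    have hMp : ((⌊X⌋₊ / d + 1 : ℕ) : ℝ) ≠ 0 := by positivity
    simp only [Function.comp]
    rw [div_mul_div_cancel₀ hMp]
    gcongr

lemma AP_bound (P : Polynomial ℝ) (hP : ¬ IsLiouvilleReal (P.coeff 1)) :
    ∃ η : ℝ, 0 < η ∧ η < 1 ∧ ∀ (p : ℕ) (X : ℝ), 1 ≤ p → (p:ℝ) ≤ X →
      ((AP P p X).card : ℝ) ≤ 192 * X * ((p:ℝ) ^ 2)⁻¹ + 32 * X ^ (1 - η) * (p:ℝ) ^ (η - 1) := by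
  obtain ⟨D, hD⟩ := expsum _ hP P.natDegree
  have hDp : (0:ℝ) < (D:ℝ) + 2 := by positivity
  refine ⟨1 / ((D:ℝ) + 2), by positivity, ?_, ?_⟩
  · rw [div_lt_one hDp]; linarith [(Nat.cast_nonneg D : (0:ℝ) ≤ D)]
  intro p X hp hpX
  set η : ℝ := 1 / ((D:ℝ) + 2) with hη
  have hη0 : 0 < η := by positivity
  have hpr : (0:ℝ) < p := by exact_mod_cast hp
  have hX : 0 < X := hpr.trans_le hpX
  set N := ⌊X⌋₊ / p + 1 with hN
  have hcard := (AP_card P p hp X).1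
  set A := (range N).filter fun y : ℕ => Int.fract ((fd P p).eval (y:ℝ)) < 1 / p with hA
  have hN2 : 2 ≤ N := by
    have : 1 ≤ ⌊X⌋₊ / p := (Nat.one_le_div_iff hp).2 (Nat.le_floor hpX)
    omega
  have hN2r : (2:ℝ) ≤ N := by exact_mod_cast hN2
  have hNlo : X / p ≤ N := by
    rw [div_le_iff₀ hpr]
    have h1 := Nat.lt_floor_add_one X
    have h2 : ⌊X⌋₊ < p * N := Nat.lt_mul_div_succ _ hp
    have h2' : (⌊X⌋₊:ℝ) + 1 ≤ p * (N:ℝ) := by exact_mod_cast h2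
    linarith
  have hNhi : (N:ℝ) ≤ 2 * (X / p) := by
    have h2 : p * (⌊X⌋₊ / p) ≤ ⌊X⌋₊ := Nat.mul_div_le _ _
    have h2' : (p:ℝ) * ((⌊X⌋₊ / p : ℕ):ℝ) ≤ ⌊X⌋₊ := by exact_mod_cast h2
    have h3 : ((⌊X⌋₊ / p : ℕ):ℝ) ≤ X / p := by
      rw [le_div_iff₀ hpr]; linarith [Nat.floor_le hX.le]
    have h4 : 1 ≤ X / p := by rw [le_div_iff₀ hpr]; linarith
    rw [hN]; push_cast; linarith
  set m : ℝ := min ((p:ℝ) / 6) ((N:ℝ) ^ η) with hm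
  have hNη : 0 < (N:ℝ) ^ η := by positivity
  have hm0 : 0 < m := lt_min (by positivity) hNη
  have hAN : (A.card : ℝ) ≤ N := by
    have : A.card ≤ N := (card_filter_le _ _).trans (card_range _).le
    exact_mod_cast this
  have hkey : (A.card : ℝ) * m ≤ 16 * N := by
    rcases lt_or_ge m 2 with h | h
    · nlinarith [(Nat.cast_nonneg A.card : (0:ℝ) ≤ A.card)]
    · set K := ⌊m⌋₊ with hK
      have hK2 : 2 ≤ K := Nat.le_floor (by exact_mod_cast h)
      have hKm : (K:ℝ) ≤ m := Nat.floor_le hm0.le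
      have hKm2 : m < K + 1 := Nat.lt_floor_add_one m
      have hK2r : (2:ℝ) ≤ K := by exact_mod_cast hK2
      have hKD : K ^ D < N := by
        have : ((K:ℝ)) ^ D < N := by
          calc (K:ℝ) ^ D ≤ ((N:ℝ) ^ η) ^ D := by
                gcongr; exact hKm.trans (min_le_right _ _)
            _ = (N:ℝ) ^ (η * D) := by rw [Real.rpow_mul (by positivity), Real.rpow_natCast]
            _ < (N:ℝ) ^ (1:ℝ) := by
                apply Real.rpow_lt_rpow_of_exponent_lt (by linarith)
                rw [hη, one_div_mul_eq_div, div_lt_one hDp]; linarith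
            _ = N := Real.rpow_one _
        exact_mod_cast this
      have hc := count_bound K N hK2 (fun y => (fd P p).eval (y:ℝ)) fun h hh hhK =>
        (hD K N (fd P p) h hK2 (fd_deg P p) (fd_coeff P p hp) hh hhK hKD).le
      have hsub : A.card ≤ ((range N).filter fun y : ℕ =>
          Int.fract ((fd P p).eval (y:ℝ)) < 1 / (6 * K)).card := by
        apply card_le_card
        intro y hy
        rw [hA, mem_filter] at hy
        rw [mem_filter]
        refine ⟨hy.1, hy.2.trans_le ?_⟩
        apply one_div_le_one_div_of_le (by positivity)
        have : m ≤ p / 6 := min_le_left _ _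
        linarith
      have hsub' : (A.card:ℝ) ≤ ((range N).filter fun y : ℕ =>
          Int.fract ((fd P p).eval (y:ℝ)) < 1 / (6 * K)).card := by exact_mod_cast hsub
      have h5 : (A.card:ℝ) * K ≤ 8 * N := le_trans (by gcongr) hc
      nlinarith [(Nat.cast_nonneg A.card : (0:ℝ) ≤ A.card)]
  have h1 : (A.card : ℝ) ≤ 16 * N * (6 / p + ((N:ℝ) ^ η)⁻¹) := by
    have h2 : 1 ≤ m * (6 / p + ((N:ℝ) ^ η)⁻¹) := by
      rcases min_choice ((p:ℝ) / 6) ((N:ℝ) ^ η) with h | h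
      · rw [hm, h, mul_add, show (p:ℝ) / 6 * (6 / p) = 1 by field_simp]
        have : 0 ≤ (p:ℝ) / 6 * ((N:ℝ) ^ η)⁻¹ := by positivity
        linarith
      · rw [hm, h, mul_add, mul_inv_cancel₀ hNη.ne']
        have : 0 ≤ (N:ℝ) ^ η * (6 / p) := by positivity
        linarith
    calc (A.card:ℝ) ≤ A.card * (m * (6 / p + ((N:ℝ) ^ η)⁻¹)) :=
          le_mul_of_one_le_right (by positivity) h2
      _ = (A.card * m) * (6 / p + ((N:ℝ) ^ η)⁻¹) := by ring
      _ ≤ _ := by gcongr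
  have h3 : ((N:ℝ) ^ η)⁻¹ ≤ ((X / p) ^ η)⁻¹ := by gcongr
  calc ((AP P p X).card : ℝ) ≤ A.card := by exact_mod_cast hcard
    _ ≤ _ := h1
    _ ≤ 16 * (2 * (X / p)) * (6 / p + ((X / p) ^ η)⁻¹) := by gcongr
    _ = _ := by
      rw [Real.div_rpow hX.le hpr.le, Real.rpow_sub hX, Real.rpow_sub hpr, Real.rpow_one,
        Real.rpow_one]
      have : X ^ η ≠ 0 := by positivity
      have : (p:ℝ) ^ η ≠ 0 := by positivity
      field_simp
      ring

lemma sum_rpow_le (η : ℝ) (h0 : 0 < η) (h1 : η < 1) (m : ℕ) :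
    ∑ p ∈ Icc 1 m, (p:ℝ) ^ (η - 1) ≤ (m:ℝ) ^ η / η := by
  induction m with
  | zero => simp; positivity
  | succ m ih =>
    rw [sum_Icc_succ_top (by omega)]
    have hm : (0:ℝ) < ((m + 1 : ℕ):ℝ) := by positivity
    have hb := rpow_one_add_le_one_add_mul_self (s := -1 / ((m + 1 : ℕ):ℝ))
      (by rw [neg_div, neg_le_neg_iff, div_le_one hm]; push_cast; linarith [(Nat.cast_nonneg m : (0:ℝ) ≤ m)])
      h0.le h1.le
    have he : 1 + -1 / ((m + 1 : ℕ):ℝ) = m / ((m + 1 : ℕ):ℝ) := by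
      push_cast at hm ⊢; field_simp; ring
    rw [he, Real.div_rpow (by positivity) (by positivity), div_le_iff₀ (by positivity)] at hb
    rw [Real.rpow_sub hm, Real.rpow_one]
    refine (add_le_add_left ih _).trans ?_
    rw [le_div_iff₀ h0, add_mul, div_mul_cancel₀ _ h0.ne']
    have : (1 + η * (-1 / ((m + 1 : ℕ):ℝ))) * ((m + 1 : ℕ):ℝ) ^ η
      = ((m + 1 : ℕ):ℝ) ^ η - ((m + 1 : ℕ):ℝ) ^ η / ((m + 1 : ℕ):ℝ) * η := by ring
    linarith

open Filter Topology in
lemma tail_bound (P : Polynomial ℝ) (hP : ¬ IsLiouvilleReal (P.coeff 1)) (ε : ℝ) (hε : 0 < ε) :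
    ∃ n0 : ℕ, ∀ n ≥ n0, ∀ᶠ X : ℝ in atTop,
      ∑ p ∈ (Icc n ⌊X⌋₊).filter Nat.Prime, ((AP P p X).card : ℝ) ≤ ε * X := by
  obtain ⟨η, hη0, hη1, hb⟩ := AP_bound P hP
  obtain ⟨δ, hδ0, hδ1, hδ⟩ : ∃ δ : ℝ, 0 < δ ∧ δ < 1 ∧ 32 * δ ^ η / η ≤ ε / 3 := by
    have ht : Tendsto (fun δ : ℝ => 32 * δ ^ η / η) (𝓝[>] 0) (𝓝 (32 * 0 ^ η / η)) := by
      have : ContinuousAt (fun δ : ℝ => 32 * δ ^ η / η) 0 := by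
        have := Real.continuousAt_rpow_const 0 η (Or.inr hη0.le)
        fun_prop
      exact this.tendsto.mono_left nhdsWithin_le_nhds
    rw [Real.zero_rpow hη0.ne'] at ht
    have h1 := ht.eventually (gt_mem_nhds (show 32 * 0 / η < ε / 3 by simpa using hε))
    have h2 : ∀ᶠ δ : ℝ in 𝓝[>] 0, δ ∈ Set.Ioo (0:ℝ) 1 := Ioo_mem_nhdsGT one_pos
    obtain ⟨δ, h3, h4⟩ := (h1.and h2).exists
    exact ⟨δ, h4.1, h4.2, h3.le⟩
  obtain ⟨n1, hn1⟩ := exists_nat_gt (1152 / ε)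
  refine ⟨n1 + 1, fun n hn => ?_⟩
  have hnr : 1152 / ε < n := hn1.trans_le (by exact_mod_cast (by omega))
  have hn0 : (0:ℝ) < n := lt_of_le_of_lt (by positivity) hnr
  have hpi := Chebyshev.eventually_primeCounting_le (ε := 1) one_pos
  have hlog := Real.tendsto_log_atTop.eventually_ge_atTop
    ((2 / δ) * (Real.log 4 + 1) / (ε / 3))
  filter_upwards [hpi, hlog, eventually_gt_atTop 1] with X hpi hlog hX1
  have hX : 0 < X := by linarith
  have hlogp : 0 < Real.log X := Real.log_pos hX1
  set m := ⌊δ * X⌋₊ with hm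
  have hmX : (m:ℝ) ≤ δ * X := Nat.floor_le (by positivity)
  have hpt : ∀ p ∈ (Icc n ⌊X⌋₊).filter Nat.Prime, ((AP P p X).card : ℝ) ≤
      192 * X * ((p:ℝ) ^ 2)⁻¹ + (if p ≤ m then 32 * X ^ (1 - η) * (p:ℝ) ^ (η - 1) else 0)
        + 2 / δ := by
    intro p hp
    rw [mem_filter, mem_Icc] at hp
    have hp1 : 1 ≤ p := hp.2.one_lt.le
    have hpr : (0:ℝ) < p := by exact_mod_cast hp1
    have hpX : (p:ℝ) ≤ X := (Nat.le_floor_iff hX.le).1 hp.1.2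
    have h2d : 0 ≤ 2 / δ := by positivity
    split_ifs with h
    · linarith [hb p X hp1 hpX]
    · have h1 : 0 ≤ 192 * X * ((p:ℝ) ^ 2)⁻¹ := by positivity
      have h2 : δ * X < p := by
        have := Nat.lt_of_floor_lt (not_le.1 h); exact this
      have h3 := (AP_card P p hp1 X).1.trans ((card_filter_le _ _).trans (card_range _).le)
      have h4 : ((AP P p X).card : ℝ) ≤ ((⌊X⌋₊ / p : ℕ):ℝ) + 1 := by exact_mod_cast h3
      have h5 : ((⌊X⌋₊ / p : ℕ):ℝ) ≤ 1 / δ := by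
        have h2' : (p:ℝ) * ((⌊X⌋₊ / p : ℕ):ℝ) ≤ ⌊X⌋₊ := by exact_mod_cast Nat.mul_div_le _ _
        have h6 := Nat.floor_le hX.le
        rw [le_div_iff₀ hδ0]
        have h7 : δ * X * ((⌊X⌋₊ / p : ℕ):ℝ) ≤ X :=
          le_trans (mul_le_mul_of_nonneg_right h2.le (Nat.cast_nonneg _)) (h2'.trans h6)
        have h8 : X * (((⌊X⌋₊ / p : ℕ):ℝ) * δ) ≤ X * 1 := by linarith
        exact le_of_mul_le_mul_left h8 hX
      have h9 : 1 ≤ 1 / δ := by rw [le_div_iff₀ hδ0]; linarith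
      have h10 : 2 / δ = 1 / δ + 1 / δ := by ring
      linarith
  refine (sum_le_sum hpt).trans ?_
  rw [sum_add_distrib, sum_add_distrib]
  have hs1 : ∑ p ∈ (Icc n ⌊X⌋₊).filter Nat.Prime, 192 * X * ((p:ℝ) ^ 2)⁻¹ ≤ ε / 3 * X := by
    rw [← mul_sum]
    have h1 : ∑ p ∈ (Icc n ⌊X⌋₊).filter Nat.Prime, ((p:ℝ) ^ 2)⁻¹ ≤ 2 / n := by
      calc _ ≤ ∑ p ∈ Ioo (n - 1) (⌊X⌋₊ + 1), ((p:ℝ) ^ 2)⁻¹ := by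
            apply sum_le_sum_of_subset_of_nonneg
            · intro p hp
              rw [mem_filter, mem_Icc] at hp
              rw [mem_Ioo]; omega
            · intro p _ _; positivity
        _ ≤ 2 / (((n - 1 : ℕ):ℝ) + 1) := sum_Ioo_inv_sq_le _ _
        _ = 2 / n := by rw [Nat.cast_sub (by omega)]; simp
    have h2 : 384 / (n:ℝ) ≤ ε / 3 := by
      rw [div_lt_iff₀ hε] at hnr
      rw [div_le_iff₀ hn0]; linarith
    calc _ ≤ 192 * X * (2 / n) := by gcongr
      _ = 384 / n * X := by ring
      _ ≤ _ := by gcongr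
  have hs2 : ∑ p ∈ (Icc n ⌊X⌋₊).filter Nat.Prime,
      (if p ≤ m then 32 * X ^ (1 - η) * (p:ℝ) ^ (η - 1) else 0) ≤ ε / 3 * X := by
    rw [← sum_filter, ← mul_sum]
    have h1 : ∑ p ∈ ((Icc n ⌊X⌋₊).filter Nat.Prime).filter (fun p => p ≤ m), (p:ℝ) ^ (η - 1)
        ≤ (m:ℝ) ^ η / η := by
      refine le_trans ?_ (sum_rpow_le η hη0 hη1 m)
      apply sum_le_sum_of_subset_of_nonneg
      · intro p hp
        rw [mem_filter, mem_filter, mem_Icc] at hp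
        rw [mem_Icc]; omega
      · intro p _ _; positivity
    calc _ ≤ 32 * X ^ (1 - η) * ((δ * X) ^ η / η) := by
          gcongr
          exact h1.trans (by gcongr)
      _ = 32 * δ ^ η / η * X := by
          rw [Real.mul_rpow hδ0.le hX.le, Real.rpow_sub hX, Real.rpow_one]
          have : X ^ η ≠ 0 := by positivity
          field_simp
      _ ≤ _ := by gcongr
  have hs3 : ∑ p ∈ (Icc n ⌊X⌋₊).filter Nat.Prime, 2 / δ ≤ ε / 3 * X := by
    rw [sum_const, nsmul_eq_mul]
    have h1 : ((Icc n ⌊X⌋₊).filter Nat.Prime).card ≤ Nat.primeCounting ⌊X⌋₊ := by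
      rw [Nat.primeCounting, Nat.primeCounting', Nat.count_eq_card_filter_range]
      apply card_le_card
      intro p hp
      rw [mem_filter, mem_Icc] at hp
      rw [mem_filter, mem_range]
      exact ⟨by omega, hp.2⟩
    have h2 : (((Icc n ⌊X⌋₊).filter Nat.Prime).card : ℝ) ≤ (Real.log 4 + 1) * X / Real.log X :=
      le_trans (by exact_mod_cast h1) hpi
    rw [div_le_iff₀ (by positivity)] at hlog
    calc _ ≤ (Real.log 4 + 1) * X / Real.log X * (2 / δ) := by gcongr
      _ = (2 / δ * (Real.log 4 + 1)) * X / Real.log X := by ring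
      _ ≤ ε / 3 * X := by
        rw [div_le_iff₀ hlogp]
        nlinarith
  linarith

/-- Shorthand for `gcd(x, ⌊P(x)⌋)`. -/
noncomputable def gx (P : Polynomial ℝ) (x : ℕ) : ℕ := Int.gcd (x : ℤ) ⌊P.eval (x : ℝ)⌋

/-- Sifted count: no prime below `n` divides the gcd. -/
noncomputable def T (P : Polynomial ℝ) (n : ℕ) (X : ℝ) : ℕ :=
  ((Icc 1 ⌊X⌋₊).filter fun x => ∀ p ∈ n.primesBelow, ¬ p ∣ gx P x).card

lemma AP_eq (P : Polynomial ℝ) (d : ℕ) (X : ℝ) :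
    AP P d X = (Icc 1 ⌊X⌋₊).filter fun x => d ∣ gx P x := by
  unfold AP
  ext x
  rw [mem_filter, mem_filter, gx, ← Int.natCast_dvd_natCast, Int.dvd_coe_gcd_iff]

lemma T_eq (P : Polynomial ℝ) (n : ℕ) (X : ℝ) :
    (T P n X : ℝ) = ∑ t ∈ n.primesBelow.powerset,
      (-1) ^ t.card * ((AP P (∏ p ∈ t, p) X).card : ℝ) := by
  have h1 : ∀ x, (if ∀ p ∈ n.primesBelow, ¬ p ∣ gx P x then (1:ℝ) else 0) =
      ∑ t ∈ n.primesBelow.powerset, (-1) ^ t.card * (if (∏ p ∈ t, p) ∣ gx P x then (1:ℝ) else 0) := by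
    intro x
    have h2 : (if ∀ p ∈ n.primesBelow, ¬ p ∣ gx P x then (1:ℝ) else 0) =
        ∏ p ∈ n.primesBelow, (1 + (-1) * (if p ∣ gx P x then (1:ℝ) else 0)) := by
      split_ifs with h
      · rw [prod_eq_one]; intro p hp; simp [h p hp]
      · push Not at h
        obtain ⟨p, hp, hd⟩ := h
        rw [prod_eq_zero hp]; simp [hd]
    rw [h2, prod_one_add]
    refine sum_congr rfl fun t ht => ?_
    rw [prod_mul_distrib, prod_const]
    congr 1
    split_ifs with h
    · refine prod_eq_one fun p hp => ?_
      rw [if_pos ((dvd_prod_of_mem _ hp).trans h)]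
    · have : ∃ p ∈ t, ¬ p ∣ gx P x := by
        by_contra hcon
        push Not at hcon
        exact h (prod_primes_dvd _ (fun p hp =>
          (Nat.prime_of_mem_primesBelow (mem_powerset.1 ht hp)).prime) hcon)
      obtain ⟨p, hp, hd⟩ := this
      rw [prod_eq_zero hp]; simp [hd]
  rw [T, card_filter]
  push_cast
  rw [sum_congr rfl fun x _ => h1 x, sum_comm]
  refine sum_congr rfl fun t _ => ?_
  rw [← mul_sum, AP_eq, card_filter]
  push_cast
  rfl

open Filter Topology in
lemma T_tendsto (P : Polynomial ℝ) (hP : ¬ IsLiouvilleReal (P.coeff 1)) (n : ℕ) :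
    Tendsto (fun X : ℝ => (T P n X : ℝ) / X) atTop
      (𝓝 (∏ p ∈ n.primesBelow, (1 - 1 / (p:ℝ) ^ 2))) := by
  have h1 : ∏ p ∈ n.primesBelow, (1 - 1 / (p:ℝ) ^ 2) =
      ∑ t ∈ n.primesBelow.powerset, (-1) ^ t.card * (1 / ((∏ p ∈ t, p : ℕ):ℝ) ^ 2) := by
    have : ∀ p ∈ n.primesBelow, (1 - 1 / (p:ℝ) ^ 2) = 1 + (-1) * (1 / (p:ℝ) ^ 2) := by
      intro p _; ring
    rw [prod_congr rfl this, prod_one_add]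
    refine sum_congr rfl fun t _ => ?_
    rw [prod_mul_distrib, prod_const]
    push_cast
    rw [← prod_pow, prod_div_distrib, prod_const_one]
  rw [h1]
  have h2 : (fun X : ℝ => (T P n X : ℝ) / X) = fun X => ∑ t ∈ n.primesBelow.powerset,
      (-1) ^ t.card * (((AP P (∏ p ∈ t, p) X).card : ℝ) / X) := by
    ext X
    rw [T_eq, sum_div]
    exact sum_congr rfl fun t _ => by ring
  rw [h2]
  refine tendsto_finsetSum _ fun t ht => ?_
  refine (AP_tendsto P hP _ ?_).const_mul _
  exact Nat.one_le_iff_ne_zero.2 (prod_ne_zero_iff.2 fun p hp =>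
    (Nat.prime_of_mem_primesBelow (mem_powerset.1 ht hp)).ne_zero)

open Filter Topology in
lemma euler : Tendsto (fun n : ℕ => ∏ p ∈ n.primesBelow, (1 - 1 / (p:ℝ) ^ 2)) atTop
    (𝓝 (6 / π ^ 2)) := by
  have h := riemannZeta_eulerProduct (s := 2) (by norm_num)
  rw [riemannZeta_two] at h
  have hne : (π:ℂ) ^ 2 / 6 ≠ 0 := by
    have : (π:ℂ) ≠ 0 := by exact_mod_cast Real.pi_ne_zero
    exact div_ne_zero (pow_ne_zero _ this) (by norm_num)
  have h2 := (Complex.continuous_re.tendsto _).comp (h.inv₀ hne)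
  have e1 : ((π:ℂ) ^ 2 / 6)⁻¹ = ((6 / π ^ 2 : ℝ) : ℂ) := by
    push_cast; rw [inv_div]
  rw [e1, Complex.ofReal_re] at h2
  refine h2.congr fun n => ?_
  simp only [Function.comp, prod_inv_distrib, inv_inv]
  have : ∏ p ∈ n.primesBelow, (1 - (p:ℂ) ^ (-2:ℂ)) =
      ((∏ p ∈ n.primesBelow, (1 - 1 / (p:ℝ) ^ 2) : ℝ) : ℂ) := by
    push_cast
    refine prod_congr rfl fun p _ => ?_
    rw [Complex.cpow_neg, Complex.cpow_ofNat, one_div]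
  rw [this, Complex.ofReal_re]

lemma S_eq (P : Polynomial ℝ) (X : ℝ) :
    S P X = ((Icc 1 ⌊X⌋₊).filter fun x => gx P x = 1).card := by
  classical
  unfold S
  rw [← card_image_of_injective ((Icc 1 ⌊X⌋₊).filter fun x => gx P x = 1)
    (Nat.cast_injective (R := ℤ))]
  congr 1
  ext x
  simp only [mem_filter, mem_image, bind_def, pure_def, mem_sup, mem_singleton]
  constructor
  · rintro ⟨⟨a, ha, rfl⟩, h⟩
    refine ⟨a, ⟨ha, ?_⟩, rfl⟩
    rw [gx]; exact_mod_cast h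
  · rintro ⟨a, ⟨ha, h⟩, rfl⟩
    refine ⟨⟨a, ha, rfl⟩, ?_⟩
    rw [gx] at h; exact_mod_cast h

lemma S_le_T (P : Polynomial ℝ) (n : ℕ) (X : ℝ) : S P X ≤ T P n X := by
  rw [S_eq, T]
  apply card_le_card
  intro x hx
  simp only [mem_filter] at hx ⊢
  refine ⟨hx.1, fun p hp hd => ?_⟩
  have h1 : gx P x = 1 := hx.2
  rw [h1] at hd
  exact (Nat.prime_of_mem_primesBelow hp).one_lt.ne' (Nat.dvd_one.1 hd)

lemma T_le_S (P : Polynomial ℝ) (n : ℕ) (X : ℝ) :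
    T P n X ≤ S P X + ∑ p ∈ (Icc n ⌊X⌋₊).filter Nat.Prime, (AP P p X).card := by
  classical
  rw [S_eq, T]
  have : ((Icc 1 ⌊X⌋₊).filter fun x => ∀ p ∈ n.primesBelow, ¬ p ∣ gx P x) ⊆
      ((Icc 1 ⌊X⌋₊).filter fun x : ℕ => gx P x = 1) ∪
      ((Icc n ⌊X⌋₊).filter Nat.Prime).biUnion fun p => AP P p X := by
    intro x hx
    rw [mem_filter, mem_Icc] at hx
    obtain ⟨⟨hx1, hx2⟩, hx3⟩ := hx
    rw [mem_union]
    by_cases h : gx P x = 1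
    · left; rw [mem_filter, mem_Icc]; exact ⟨⟨hx1, hx2⟩, h⟩
    · right
      obtain ⟨p, hp, hpd⟩ := Nat.exists_prime_and_dvd h
      rw [mem_biUnion]
      have hpx : p ∣ x := by
        have : gx P x ∣ x := by
          have := Int.gcd_dvd_left (x:ℤ) ⌊P.eval (x : ℝ)⌋
          exact Int.natCast_dvd_natCast.1 this
        exact hpd.trans this
      refine ⟨p, ?_, ?_⟩
      · rw [mem_filter, mem_Icc]
        refine ⟨⟨?_, (Nat.le_of_dvd (by omega) hpx).trans hx2⟩, hp⟩
        by_contra hlt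
        exact hx3 p (Nat.mem_primesBelow.2 ⟨by omega, hp⟩) hpd
      · rw [AP_eq, mem_filter, mem_Icc]; exact ⟨⟨hx1, hx2⟩, hpd⟩
  refine (card_le_card this).trans ((card_union_le _ _).trans ?_)
  exact add_le_add le_rfl card_biUnion_le

open Filter Topology in
theorem main (P : Polynomial ℝ) (hP : ¬ IsLiouvilleReal (P.coeff 1)) :
    Tendsto (fun X : ℝ => (S P X : ℝ) / X) atTop (𝓝 (6 / π ^ 2)) := by
  rw [Metric.tendsto_nhds]
  intro ε hε
  obtain ⟨n0, hn0⟩ := tail_bound P hP (ε / 4) (by positivity)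
  obtain ⟨n1, hn1⟩ := Metric.tendsto_atTop.1 euler (ε / 4) (by positivity)
  set n := max n0 n1
  have h1 := hn0 n (le_max_left _ _)
  have h2 := hn1 n (le_max_right _ _)
  have h3 := Metric.tendsto_nhds.1 (T_tendsto P hP n) (ε / 4) (by positivity)
  filter_upwards [h1, h3, eventually_gt_atTop 0] with X h1 h3 hX
  rw [Real.dist_eq, abs_lt] at *
  have h4 : (S P X : ℝ) / X ≤ (T P n X : ℝ) / X := by
    gcongr; exact S_le_T P n X
  have h5 : (T P n X : ℝ) / X ≤ (S P X : ℝ) / X + ε / 4 := by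
    rw [div_add' _ _ _ hX.ne']
    gcongr
    have : (T P n X : ℝ) ≤ S P X + ∑ p ∈ (Icc n ⌊X⌋₊).filter Nat.Prime, ((AP P p X).card : ℝ) := by
      exact_mod_cast T_le_S P n X
    linarith
  constructor <;> linarith [h2.1, h2.2, h3.1, h3.2]

end WS

/-- If the coefficient of `x` in `P` is non-Liouville, then `S(X)/X → 6/π²` as `X → ∞`. -/
theorem statement1 (P : Polynomial ℝ) (hP : ¬ IsLiouvilleReal (P.coeff 1)) :
    Filter.Tendsto (fun X : ℝ => (S P X : ℝ) / X) Filter.atTop (nhds (6 / π ^ 2)) := by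
  exact WS.main P hP
end

section
/- Let P ∈ ℝ[x] be a polynomial whose coefficient of x is non-Liouville. Then there exist constants τ > 0, ρ > 0 and X₀ > 0 such that for every positive integer d, every positive integer m, and every real X ≥ X₀ with m < X^ρ, one has |∑_{x=1}^{⌊X⌋} e(m·P(d·x)/d)| ≤ X^{1−τ}. -/
open Real Finset

/-- `α` is Liouville: for every `n ∈ ℕ` there are integers `p, q` with `q > 1`
and `|α - p/q| ≤ q^(-n)`. -/
def IsLiouvilleNumber (α : ℝ) : Prop :=
  ∀ n : ℕ, ∃ p q : ℤ, 1 < q ∧ |α - (p : ℝ) / (q : ℝ)| ≤ (q : ℝ) ^ (-(n : ℤ))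

noncomputable def ee (t : ℝ) : ℂ := Complex.exp (2 * (π : ℂ) * Complex.I * (t : ℂ))

lemma ee_eq (t : ℝ) : ee t = Complex.exp (((2 * π * t : ℝ) : ℂ) * Complex.I) := by
  unfold ee; congr 1; push_cast; ring

lemma norm_ee (t : ℝ) : ‖ee t‖ = 1 := by
  rw [ee_eq, Complex.norm_exp_ofReal_mul_I]

lemma ee_add (s t : ℝ) : ee (s + t) = ee s * ee t := by
  unfold ee; rw [← Complex.exp_add]; congr 1; push_cast; ring

lemma ee_int (a : ℤ) : ee a = 1 := by
  unfold ee
  have := Complex.exp_int_mul_two_pi_mul_I a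
  rw [← this]; congr 1; push_cast; ring

lemma ee_zero : ee 0 = 1 := by simpa using ee_int 0

lemma ee_conj (t : ℝ) : (starRingEnd ℂ) (ee t) = ee (-t) := by
  unfold ee
  rw [← Complex.exp_conj]; congr 1
  simp only [map_mul, Complex.conj_ofReal, Complex.conj_I, map_ofNat, Complex.ofReal_neg]
  ring

lemma ee_sub_int (t : ℝ) (a : ℤ) : ee (t - a) = ee t := by
  have : ee t = ee (t - a) * ee a := by rw [← ee_add]; congr 1; ring
  rw [this, ee_int, mul_one]

lemma ee_dist (s t : ℝ) (a : ℤ) : ‖ee s - ee t‖ ≤ 2 * π * |s - t - a| := by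
  have h : ee s = ee t * ee (s - t - a) := by
    rw [ee_sub_int, ← ee_add]; congr 1; ring
  rw [h]
  have : ee t * ee (s - t - a) - ee t = ee t * (ee (s - t - a) - 1) := by ring
  rw [this, norm_mul, norm_ee, one_mul, ee_eq, mul_comm _ Complex.I]
  refine (Real.norm_exp_I_mul_ofReal_sub_one_le).trans ?_
  rw [Real.norm_eq_abs, abs_mul, abs_of_pos (by positivity : 0 < 2 * π)]

/-- lower bound for `|e(t) - 1|`. -/
lemma ee_sub_one_lower (t : ℝ) : 4 * |t - round t| ≤ ‖ee t - 1‖ := by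
  rw [← ee_sub_int t (round t)]
  set u : ℝ := t - round t with hu
  have hu2 : |u| ≤ 1 / 2 := abs_sub_round t
  rw [ee_eq, mul_comm _ Complex.I, Complex.norm_exp_I_mul_ofReal_sub_one]
  rw [Real.norm_eq_abs, abs_mul, abs_two]
  have h1 : 2 * π * u / 2 = π * u := by ring
  rw [h1]
  have h2 : |Real.sin (π * u)| = Real.sin (π * |u|) := by
    rcases abs_cases u with ⟨h, h'⟩ | ⟨h, h'⟩
    · rw [h]; apply abs_of_nonneg
      apply Real.sin_nonneg_of_nonneg_of_le_pi (by positivity)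
      rw [h] at hu2; nlinarith [Real.pi_pos]
    · rw [h, mul_neg, Real.sin_neg]; apply abs_of_nonpos
      have := Real.sin_nonneg_of_nonneg_of_le_pi (x := π * (-u)) (by nlinarith [Real.pi_pos])
        (by rw [h] at hu2; nlinarith [Real.pi_pos])
      rw [mul_neg, Real.sin_neg] at this; linarith
  rw [h2]
  have h3 := Real.mul_le_sin (x := π * |u|) (by positivity) (by nlinarith [Real.pi_pos])
  have h4 : 2 / π * (π * |u|) = 2 * |u| := by field_simp
  linarith

lemma geom_bound (α c : ℝ) (M : ℕ) :
    ‖∑ x ∈ range M, ee (α * x + c)‖ * |α - round α| ≤ 1 := by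
  have h1 : ∑ x ∈ range M, ee (α * x + c) = (∑ x ∈ range M, (ee α) ^ x) * ee c := by
    rw [Finset.sum_mul]; apply Finset.sum_congr rfl; rintro x -
    rw [ee_add]; congr 1
    induction x with
    | zero => simp [ee_zero]
    | succ n ih => rw [pow_succ, ← ih, ← ee_add]; congr 1; push_cast; ring
  have h2 := geom_sum_mul (ee α) M
  rw [h1, norm_mul, norm_ee, mul_one]
  have h3 : ‖∑ x ∈ range M, (ee α) ^ x‖ * ‖ee α - 1‖ ≤ 2 := by
    rw [← norm_mul, h2]
    refine (norm_sub_le _ _).trans ?_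
    rw [norm_pow, norm_ee]; norm_num
  have := ee_sub_one_lower α
  nlinarith [norm_nonneg (∑ x ∈ range M, (ee α) ^ x), abs_nonneg (α - round α)]

lemma vdc_eq (g : ℕ → ℝ) (M : ℕ) :
    ‖∑ x ∈ range M, ee (g x)‖ ^ 2 + M =
      2 * (∑ h ∈ range M, ∑ x ∈ range (M - h), ee (g (x + h) - g x)).re := by
  rw [← Finset.sum_range_diag_flip M (fun h x => ee (g (x + h) - g x))]
  induction M with
  | zero => simp
  | succ M ih =>
    rw [Finset.sum_range_succ, Finset.sum_range_succ (fun m => ∑ k ∈ range (m + 1), _),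
      Complex.add_re, mul_add, ← ih]
    have h1 : ∑ k ∈ range (M + 1), ee (g (M - k + k) - g (M - k)) =
        1 + ee (g M) * (starRingEnd ℂ) (∑ x ∈ range M, ee (g x)) := by
      rw [Finset.sum_range_succ']
      simp only [Nat.sub_zero, Nat.add_zero, sub_self, ee_zero]
      rw [add_comm, map_sum, Finset.mul_sum, ← Finset.sum_range_reflect]
      congr 1
      apply Finset.sum_congr rfl
      intro x hx
      have hx := Finset.mem_range.1 hx
      have e1 : M - (M - 1 - x + 1) = x := by omega
      have e2 : x + (M - 1 - x + 1) = M := by omega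
      rw [e1, e2, ee_conj, ← ee_add]; rfl
    rw [h1]
    set S := ∑ x ∈ range M, ee (g x)
    have h3 := norm_ee (g M)
    set u := ee (g M)
    have : ‖S + u‖ ^ 2 = ‖S‖ ^ 2 + ‖u‖ ^ 2 + 2 * (u * (starRingEnd ℂ) S).re := by
      simp only [Complex.sq_norm, Complex.normSq_apply]
      simp; ring
    rw [this, h3]; push_cast; simp; ring

lemma vdc (g : ℕ → ℝ) (M : ℕ) :
    ‖∑ x ∈ range M, ee (g x)‖ ^ 2 ≤
      2 * ∑ h ∈ range M, ‖∑ x ∈ range (M - h), ee (g (x + h) - g x)‖ := by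
  have h := vdc_eq g M
  have h2 := Complex.re_le_norm (∑ h ∈ range M, ∑ x ∈ range (M - h), ee (g (x + h) - g x))
  have h3 := norm_sum_le (range M) (fun h => ∑ x ∈ range (M - h), ee (g (x + h) - g x))
  have : (0:ℝ) ≤ M := by positivity
  linarith

lemma card_le_diam (T : Finset ℕ) (D : ℝ) (hD : 0 ≤ D)
    (h : ∀ y ∈ T, ∀ y' ∈ T, (y' : ℝ) - y ≤ D) : (T.card : ℝ) ≤ D + 1 := by
  rcases T.eq_empty_or_nonempty with rfl | hT
  · simp; linarith
  have hsub : T ⊆ Finset.Icc (T.min' hT) (T.max' hT) := fun x hx =>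
    Finset.mem_Icc.2 ⟨T.min'_le x hx, T.le_max' x hx⟩
  have h1 := Finset.card_le_card hsub
  rw [Nat.card_Icc] at h1
  have h2 := h _ (T.min'_mem hT) _ (T.max'_mem hT)
  have h3 : T.min' hT ≤ T.max' hT := T.min'_le _ (T.max'_mem hT)
  have h4 : T.card + T.min' hT ≤ T.max' hT + 1 := by omega
  have h5 : (T.card : ℝ) + (T.min' hT : ℕ) ≤ (T.max' hT : ℕ) + 1 := by exact_mod_cast h4
  linarith

lemma recur (N K : ℕ) (hK : 2 ≤ K) (hN : 2 * K < N) (β ε : ℝ) (hε : 0 < ε)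
    (hε2 : 32 * K * ε ≤ 1) (H : Finset ℕ) (hH : ∀ h ∈ H, h < N)
    (hcard : (N : ℝ) ≤ K * H.card) (hgood : ∀ h ∈ H, ∃ a : ℤ, |h * β - a| ≤ ε) :
    ∃ q : ℕ, 1 ≤ q ∧ q ≤ 2 * K ∧ ∃ a : ℤ, |q * β - a| * N ≤ 16 * K ^ 2 * ε := by
  have hK' : (2 : ℝ) ≤ K := by exact_mod_cast hK
  have hcardN : N ≤ K * H.card := by exact_mod_cast hcard
  have hε3 : 64 * ε ≤ 1 := by nlinarith
  obtain ⟨q, hq1, hq2, a, ha⟩ : ∃ q : ℕ, 1 ≤ q ∧ q ≤ 2 * K ∧ ∃ a : ℤ, |q * β - a| ≤ 2 * ε := by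
    have hlt : (range (N / (2 * K) + 1)).card < H.card := by
      rw [Finset.card_range]
      have h1 : N / (2 * K) * (2 * K) ≤ N := Nat.div_mul_le_self _ _
      by_contra hcon
      push Not at hcon
      have := Nat.mul_le_mul_left K hcon
      nlinarith
    obtain ⟨x, hx, y, hy, hne, hxy⟩ := Finset.exists_ne_map_eq_of_card_lt_of_maps_to hlt
      (f := fun h => h / (2 * K)) (by
        intro h hh
        simp only [Finset.coe_range, Set.mem_Iio]
        exact Nat.lt_succ_of_le (Nat.div_le_div_right (hH h hh).le))
    have hxy : x / (2 * K) = y / (2 * K) := hxy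
    have key : ∀ x y : ℕ, x ∈ H → y ∈ H → x < y → x / (2 * K) = y / (2 * K) →
        ∃ q : ℕ, 1 ≤ q ∧ q ≤ 2 * K ∧ ∃ a : ℤ, |q * β - a| ≤ 2 * ε := by
      intro x y hx hy hlt hxy
      have e1 := Nat.div_add_mod x (2 * K)
      have e2 := Nat.div_add_mod y (2 * K)
      have e3 := Nat.mod_lt x (show 2 * K > 0 by omega)
      have e4 := Nat.mod_lt y (show 2 * K > 0 by omega)
      rw [hxy] at e1
      obtain ⟨a, ha⟩ := hgood x hx
      obtain ⟨b, hb⟩ := hgood y hy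
      refine ⟨y - x, by omega, by omega, b - a, ?_⟩
      rw [Nat.cast_sub hlt.le]
      have : ((y : ℝ) - x) * β - ((b - a : ℤ) : ℝ) = (y * β - b) - (x * β - a) := by
        push_cast; ring
      rw [this]
      have := abs_sub (y * β - b) (x * β - a)
      linarith
    rcases lt_or_gt_of_ne hne with h | h
    · exact key x y hx hy h hxy
    · exact key y x hy hx h hxy.symm
  refine ⟨q, hq1, hq2, a, ?_⟩
  set θ : ℝ := q * β - a with hθ
  rcases eq_or_ne θ 0 with h0 | h0
  · rw [h0]; simp; positivity
  have hθp : 0 < |θ| := abs_pos.2 h0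
  set L : ℕ := ⌊1 / (2 * |θ|)⌋₊ with hL
  have hinv : 2 ≤ 1 / (2 * |θ|) := by
    rw [le_div_iff₀ (by positivity)]; linarith
  have hL1 : (L : ℝ) ≤ 1 / (2 * |θ|) := Nat.floor_le (by positivity)
  have hL2 : 1 / (2 * |θ|) < L + 1 := Nat.lt_floor_add_one _
  have hLθ : L * |θ| ≤ 1 / 2 := by
    rw [le_div_iff₀ (by positivity)] at hL1; linarith
  have hL3 : 1 ≤ 4 * |θ| * L := by
    have : 1 / (2 * |θ|) ≤ 2 * L := by linarith
    rw [div_le_iff₀ (by positivity)] at this; linarith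
  have hLpos : 0 < L := by
    rcases Nat.eq_zero_or_pos L with h | h
    · rw [h] at hL3; norm_num at hL3
    · exact h
  have hfib := Finset.card_le_mul_card_image (f := fun h => (h % q, h / q / L)) H
    ⌊4 * ε / |θ|⌋₊ (by
      intro p _
      apply Nat.le_floor
      set T := H.filter (fun h => (h % q, h / q / L) = p) with hT
      have hinj : (T.image (fun h => h / q)).card = T.card := by
        apply Finset.card_image_of_injOn
        intro x hx y hy hxy
        simp only [hT, Finset.coe_filter, Set.mem_ofPred_eq] at hx hy
        have h1 : x % q = y % q := by
          have := hx.2.trans hy.2.symm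
          exact (Prod.mk.inj this).1
        simp only at hxy
        rw [← Nat.div_add_mod x q, ← Nat.div_add_mod y q, h1, hxy]
      rw [← hinj]
      have hb := card_le_diam (T.image (fun h => h / q)) (2 * ε / |θ|) (by positivity) (by
        intro y hy y' hy'
        obtain ⟨x, hx, rfl⟩ := Finset.mem_image.1 hy
        obtain ⟨x', hx', rfl⟩ := Finset.mem_image.1 hy'
        simp only [hT, Finset.mem_filter] at hx hx'
        have heq := hx.2.trans hx'.2.symm
        obtain ⟨hm, hd⟩ := Prod.mk.inj heq
        obtain ⟨b, hb⟩ := hgood x hx.1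
        obtain ⟨b', hb'⟩ := hgood x' hx'.1
        have e1 := Nat.div_add_mod x q
        have e2 := Nat.div_add_mod x' q
        have r1 := Nat.div_add_mod (x / q) L
        have r2 := Nat.div_add_mod (x' / q) L
        have s1 := Nat.mod_lt (x / q) hLpos
        have s2 := Nat.mod_lt (x' / q) hLpos
        rw [← hd] at r2
        rw [← hm] at e2
        generalize x / q = y at *
        generalize x' / q = y' at *
        generalize x % q = r at *
        have hyy : |(y' : ℝ) - y| ≤ L := by
          have h1 : y' ≤ y + L := by omega
          have h2 : y ≤ y' + L := by omega
          have h1' : (y' : ℝ) ≤ y + L := by exact_mod_cast h1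
          have h2' : (y : ℝ) ≤ y' + L := by exact_mod_cast h2
          rw [abs_le]; constructor <;> linarith
        have e1' : (x : ℝ) = q * y + r := by exact_mod_cast e1.symm
        have e2' : (x' : ℝ) = q * y' + r := by exact_mod_cast e2.symm
        set c : ℤ := b' - b - (y' - y) * a with hc
        have hdiff : |((y' : ℝ) - y) * θ - c| ≤ 2 * ε := by
          have : ((y' : ℝ) - y) * θ - c = (x' * β - b') - (x * β - b) := by
            rw [e1', e2', hθ, hc]; push_cast; ring
          rw [this]
          have := abs_sub (x' * β - b') (x * β - b)
          linarith
        have hsm : |((y' : ℝ) - y) * θ| ≤ 1 / 2 := by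
          rw [abs_mul]; nlinarith
        have hc0 : c = 0 := by
          have h1 := abs_le.1 hdiff
          have h2 := abs_le.1 hsm
          have h3 : (c : ℝ) < 1 := by linarith
          have h4 : (-1 : ℝ) < c := by linarith
          have h3' : c < 1 := by exact_mod_cast h3
          have h4' : -1 < c := by exact_mod_cast h4
          omega
        rw [hc0, Int.cast_zero, sub_zero, abs_mul] at hdiff
        rw [le_div_iff₀ hθp]
        have := le_abs_self ((y' : ℝ) - y)
        nlinarith)
      have : 1 ≤ 2 * ε / |θ| := by rw [le_div_iff₀ hθp]; linarith
      have e : 4 * ε / |θ| = 2 * ε / |θ| + 2 * ε / |θ| := by ring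
      linarith)
  have himg : (H.image (fun h => (h % q, h / q / L))).card ≤ q * (N / (q * L) + 1) := by
    have : H.image (fun h => (h % q, h / q / L)) ⊆ range q ×ˢ range (N / (q * L) + 1) := by
      intro p hp
      obtain ⟨h, hh, rfl⟩ := Finset.mem_image.1 hp
      simp only [Finset.mem_product, Finset.mem_range]
      refine ⟨Nat.mod_lt _ hq1, ?_⟩
      rw [Nat.div_div_eq_div_mul]
      exact Nat.lt_succ_of_le (Nat.div_le_div_right (hH h hh).le)
    have := Finset.card_le_card this
    rwa [Finset.card_product, Finset.card_range, Finset.card_range] at this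
  have hLr : (0 : ℝ) < L := by exact_mod_cast hLpos
  have hqr : (0 : ℝ) < q := by exact_mod_cast hq1
  have h1 : (H.card : ℝ) ≤ (4 * ε / |θ|) * (q * (N / (q * L) + 1)) := by
    have a1 : (H.card : ℝ) ≤ (⌊4 * ε / |θ|⌋₊ : ℝ) * ((q : ℝ) * (((N / (q * L) : ℕ) : ℝ) + 1)) := by
      exact_mod_cast hfib.trans (Nat.mul_le_mul_left _ himg)
    refine a1.trans ?_
    have a2 : (⌊4 * ε / |θ|⌋₊ : ℝ) ≤ 4 * ε / |θ| := Nat.floor_le (by positivity)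
    have a3 : ((N / (q * L) : ℕ) : ℝ) ≤ N / (q * L) := by
      have := Nat.cast_div_le (α := ℝ) (m := N) (n := q * L)
      push_cast at this; exact this
    gcongr
  have h2 : (q : ℝ) * (N / (q * L) + 1) ≤ 4 * |θ| * N + q := by
    have : (q : ℝ) * (N / (q * L) + 1) = N / L + q := by field_simp
    rw [this]
    have : (N : ℝ) / L ≤ 4 * |θ| * N := by
      rw [div_le_iff₀ hLr]
      have : (0 : ℝ) ≤ N := by positivity
      nlinarith
    linarith
  have h3 : |θ| * H.card ≤ 4 * ε * (4 * |θ| * N + q) := by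
    have : (H.card : ℝ) ≤ (4 * ε / |θ|) * (4 * |θ| * N + q) := h1.trans (by gcongr)
    calc |θ| * H.card ≤ |θ| * ((4 * ε / |θ|) * (4 * |θ| * N + q)) := by gcongr
      _ = _ := by field_simp
  have h4 : |θ| * N ≤ K * (4 * ε * (4 * |θ| * N + q)) := by
    calc |θ| * N ≤ |θ| * (K * H.card) := by gcongr
      _ = K * (|θ| * H.card) := by ring
      _ ≤ _ := by gcongr
  have h5 : (32 * K * ε) * (|θ| * N) ≤ |θ| * N := by
    have : 0 ≤ |θ| * N := by positivity
    nlinarith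
  have h6 : |θ| * N ≤ 8 * K * ε * q := by nlinarith
  have h7 : (q : ℝ) ≤ 2 * K := by exact_mod_cast hq2
  calc |θ| * N ≤ 8 * K * ε * q := h6
    _ ≤ 8 * K * ε * (2 * K) := by gcongr
    _ = _ := by ring

lemma taylor_coeff_top (f : Polynomial ℝ) (i : ℕ) (hf : f.natDegree ≤ i) (r : ℝ) :
    (Polynomial.taylor r f).coeff i = f.coeff i := by
  rw [Polynomial.taylor_coeff]
  have : (Polynomial.hasseDeriv i f).natDegree ≤ 0 := by
    have := Polynomial.natDegree_hasseDeriv_le f i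
    omega
  rw [Polynomial.eq_C_of_natDegree_le_zero this, Polynomial.eval_C, Polynomial.hasseDeriv_coeff]
  simp

lemma taylor_coeff_pred (f : Polynomial ℝ) (i : ℕ) (hf : f.natDegree ≤ i + 1) (r : ℝ) :
    (Polynomial.taylor r f).coeff i = f.coeff i + (i + 1) * r * f.coeff (i + 1) := by
  rw [Polynomial.taylor_coeff]
  have : (Polynomial.hasseDeriv i f).natDegree ≤ 1 := by
    have := Polynomial.natDegree_hasseDeriv_le f i
    omega
  rw [Polynomial.eval_eq_sum_range' (n := 2) (by omega), Finset.sum_range_succ,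
    Finset.sum_range_one, Polynomial.hasseDeriv_coeff, Polynomial.hasseDeriv_coeff]
  have h : (1 + i).choose i = i + 1 := by
    rw [add_comm]; exact Nat.choose_succ_self_right i
  rw [h, add_comm 1 i]
  simp; ring

lemma diff_poly (f : Polynomial ℝ) (i : ℕ) (hf : f.natDegree ≤ i + 1) (r : ℝ) :
    (Polynomial.taylor r f - f).natDegree ≤ i ∧
    (Polynomial.taylor r f - f).coeff i = (i + 1) * r * f.coeff (i + 1) := by
  constructor
  · rw [Polynomial.natDegree_le_iff_coeff_eq_zero]
    intro n hn
    rw [Polynomial.coeff_sub]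
    rcases eq_or_lt_of_le (Nat.succ_le_of_lt hn) with h | h
    · rw [← h, taylor_coeff_top f _ hf, sub_self]
    · rw [Polynomial.coeff_eq_zero_of_natDegree_lt, Polynomial.coeff_eq_zero_of_natDegree_lt,
        sub_self]
      · omega
      · rw [Polynomial.natDegree_taylor]; omega
  · rw [Polynomial.coeff_sub, taylor_coeff_pred f i hf]; ring

lemma two_pow_bound (K : ℕ) (hK : 2 ≤ K) (n : ℕ) : n ≤ K ^ n :=
  (Nat.lt_two_pow_self).le.trans (Nat.pow_le_pow_left hK n)

/-- Weyl's inequality, inverse form, for the top coefficient. -/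
lemma weyl_top (i : ℕ) : ∃ C : ℕ, ∀ f : Polynomial ℝ, f.natDegree ≤ i + 1 →
    ∀ K M N : ℕ, 2 ≤ K → M ≤ N → (N : ℝ) ≤ K * ‖∑ x ∈ range M, ee (f.eval (x : ℝ))‖ →
    ∃ q : ℕ, 1 ≤ q ∧ q ≤ K ^ C ∧
      ∃ a : ℤ, |q * f.coeff (i + 1) - a| * (N : ℝ) ^ (i + 1) ≤ (K : ℝ) ^ C := by
  induction i with
  | zero =>
    refine ⟨1, fun f hf K M N hK hMN hS => ⟨1, le_rfl, by simp; omega, round (f.coeff 1), ?_⟩⟩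
    have h1 : ∀ x : ℕ, f.eval (x : ℝ) = f.coeff 1 * x + f.coeff 0 := by
      intro x
      rw [Polynomial.eval_eq_sum_range' (n := 2) (by omega), Finset.sum_range_succ,
        Finset.sum_range_one]
      simp; ring
    simp only [h1] at hS
    have h2 := geom_bound (f.coeff 1) (f.coeff 0) M
    simp only [Nat.cast_one, one_mul, zero_add, pow_one]
    have h3 := abs_nonneg (f.coeff 1 - round (f.coeff 1))
    have hK0 : (0 : ℝ) ≤ K := by positivity
    calc |f.coeff 1 - round (f.coeff 1)| * N ≤ |f.coeff 1 - round (f.coeff 1)| *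
          (K * ‖∑ x ∈ range M, ee (f.coeff 1 * x + f.coeff 0)‖) := by gcongr
      _ = K * (‖∑ x ∈ range M, ee (f.coeff 1 * x + f.coeff 0)‖ *
          |f.coeff 1 - round (f.coeff 1)|) := by ring
      _ ≤ K * 1 := by gcongr
      _ = K := mul_one _
  | succ i ih =>
    obtain ⟨C₁, hC₁⟩ := ih
    set E : ℕ := 5 + 4 * (2 * C₁ + 1) with hE
    refine ⟨E * (i + 2) + (12 * C₁ + 12) + (i + 2), ?_⟩
    intro f hf K M N hK hMN hS
    set C : ℕ := E * (i + 2) + (12 * C₁ + 12) + (i + 2) with hC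
    have hKr : (2 : ℝ) ≤ K := by exact_mod_cast hK
    have hK1 : 1 ≤ K := by omega
    have hpow : ∀ a b : ℕ, a ≤ b → K ^ a ≤ K ^ b := fun a b h => Nat.pow_le_pow_right hK1 h
    set K₁ : ℕ := 4 * K ^ 2 with hK₁
    have hK₁le : K₁ ≤ K ^ 4 := by
      have : 4 ≤ K ^ 2 := by nlinarith
      calc K₁ = 4 * K ^ 2 := rfl
        _ ≤ K ^ 2 * K ^ 2 := by gcongr
        _ = K ^ 4 := by ring
    have hK₁2 : 2 ≤ K₁ := by nlinarith
    have hK₁pow : ∀ n, K₁ ^ n ≤ K ^ (4 * n) := fun n => by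
      rw [pow_mul]; exact Nat.pow_le_pow_left hK₁le n
    have h32 : 32 ≤ K ^ 5 := by
      calc 32 = 2 ^ 5 := by norm_num
        _ ≤ K ^ 5 := Nat.pow_le_pow_left hK 5
    have hBle : 32 * K₁ ^ (2 * C₁ + 1) ≤ K ^ E := by
      rw [hE, pow_add K 5 (4 * (2 * C₁ + 1))]; exact Nat.mul_le_mul h32 (hK₁pow _)
    rcases lt_or_ge N (32 * K₁ ^ (2 * C₁ + 1)) with hsmall | hbig
    · refine ⟨1, le_rfl, Nat.one_le_pow _ _ hK1, round (f.coeff (i + 1 + 1)), ?_⟩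
      have h1 : N ^ (i + 2) ≤ K ^ C := by
        calc N ^ (i + 2) ≤ (K ^ E) ^ (i + 2) := Nat.pow_le_pow_left (hsmall.le.trans hBle) _
          _ = K ^ (E * (i + 2)) := (pow_mul _ _ _).symm
          _ ≤ K ^ C := hpow _ _ (by omega)
      have h2 := abs_sub_round (f.coeff (i + 1 + 1))
      have h3 : (N : ℝ) ^ (i + 2) ≤ (K : ℝ) ^ C := by exact_mod_cast h1
      have h4 : (0 : ℝ) ≤ (N : ℝ) ^ (i + 2) := by positivity
      simp only [Nat.cast_one, one_mul]
      have e : i + 1 + 1 = i + 2 := rfl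
      rw [e] at *
      nlinarith
    have hN0 : 0 < N := lt_of_lt_of_le (by positivity) hbig
    have hNr : (0 : ℝ) < N := by exact_mod_cast hN0
    set S : ℕ → ℝ := fun h => ‖∑ x ∈ range (M - h), ee (f.eval ((x + h : ℕ) : ℝ) - f.eval (x : ℝ))‖
      with hSdef
    have hvdc : ‖∑ x ∈ range M, ee (f.eval (x : ℝ))‖ ^ 2 ≤ 2 * ∑ h ∈ range M, S h :=
      vdc (fun x => f.eval (x : ℝ)) M
    set H : Finset ℕ := (range M).filter (fun h => (N : ℝ) ≤ K₁ * S h) with hHdef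
    have hSle : ∀ h, S h ≤ N := by
      intro h
      refine (norm_sum_le _ _).trans ?_
      simp only [norm_ee, Finset.sum_const, Finset.card_range, nsmul_eq_mul, mul_one]
      exact_mod_cast (Nat.sub_le _ _).trans hMN
    have hK₁r : (K₁ : ℝ) = 4 * (K : ℝ) ^ 2 := by rw [hK₁]; push_cast; ring
    have hK₁pos : (0 : ℝ) < K₁ := by rw [hK₁r]; positivity
    have hHcard : (N : ℝ) ≤ K₁ * H.card := by
      have h1 : ∑ h ∈ range M, S h ≤ ∑ h ∈ range M, ((if (N : ℝ) ≤ K₁ * S h then (N : ℝ) else 0) + N / K₁) := by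
        apply Finset.sum_le_sum
        intro h _
        split_ifs with hh
        · have := hSle h
          have : (0 : ℝ) ≤ N / K₁ := by positivity
          linarith [hSle h]
        · push Not at hh
          rw [zero_add, le_div_iff₀ hK₁pos]; linarith
      rw [Finset.sum_add_distrib, ← Finset.sum_filter, Finset.sum_const, Finset.sum_const,
        Finset.card_range, nsmul_eq_mul, nsmul_eq_mul] at h1
      have h2 : (M : ℝ) * (N / K₁) ≤ N * (N / K₁) := by
        have : (M : ℝ) ≤ N := by exact_mod_cast hMN
        gcongr
      have h3 : (N : ℝ) ^ 2 ≤ K ^ 2 * (2 * (H.card * N + N * (N / K₁))) := by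
        calc (N : ℝ) ^ 2 ≤ (K * ‖∑ x ∈ range M, ee (f.eval (x : ℝ))‖) ^ 2 := by gcongr
          _ = K ^ 2 * ‖∑ x ∈ range M, ee (f.eval (x : ℝ))‖ ^ 2 := by ring
          _ ≤ K ^ 2 * (2 * ∑ h ∈ range M, S h) := by gcongr
          _ ≤ _ := by gcongr; linarith
      have h4 : (K : ℝ) ^ 2 * (2 * (H.card * N + N * (N / K₁))) =
          N * (K₁ * H.card / 2 + N / 2) := by
        rw [hK₁r]; field_simp; ring
      rw [h4, pow_two] at h3
      have h5 := le_of_mul_le_mul_left h3 hNr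
      linarith
    have hind : ∀ h : ℕ, ∃ q : ℕ, h ∈ H → (1 ≤ q ∧ q ≤ K₁ ^ C₁ ∧ ∃ a : ℤ,
        |q * ((i + 2) * h * f.coeff (i + 2)) - a| * (N : ℝ) ^ (i + 1) ≤ (K₁ : ℝ) ^ C₁) := by
      intro h
      by_cases hh : h ∈ H
      · obtain ⟨hd1, hd2⟩ := diff_poly f (i + 1) hf (h : ℝ)
        have hh' := (Finset.mem_filter.1 hh).2
        obtain ⟨q, h1, h2, a, h3⟩ := hC₁ _ hd1 K₁ (M - h) N hK₁2 ((Nat.sub_le _ _).trans hMN) (by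
          refine hh'.trans (le_of_eq ?_)
          rw [hSdef]
          simp only
          congr 2
          apply Finset.sum_congr rfl
          intro x _
          rw [Polynomial.eval_sub, Polynomial.taylor_eval]
          push_cast; rfl)
        refine ⟨q, fun _ => ⟨h1, h2, a, ?_⟩⟩
        rw [hd2] at h3
        convert h3 using 5
        push_cast; ring
      · exact ⟨0, fun h => absurd h hh⟩
    choose Q hQ using hind
    obtain ⟨q, hq, hqcard⟩ := Finset.exists_le_card_fiber_of_nsmul_le_card_of_maps_to
      (s := H) (t := Finset.Icc 1 (K₁ ^ C₁)) (f := Q) (b := (H.card : ℝ) / (K₁ : ℝ) ^ C₁)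
      (fun h hh => Finset.mem_Icc.2 ⟨(hQ h hh).1, (hQ h hh).2.1⟩)
      ⟨1, Finset.mem_Icc.2 ⟨le_rfl, Nat.one_le_pow _ _ (by omega)⟩⟩
      (by
        rw [Nat.card_Icc, nsmul_eq_mul]
        simp only [Nat.add_sub_cancel, Nat.cast_pow]
        exact le_of_eq (mul_div_cancel₀ _ (by positivity)))
    obtain ⟨hq1, hq2⟩ := Finset.mem_Icc.1 hq
    set H' := H.filter (fun h => Q h = q) with hH'
    set K₂ : ℕ := K₁ ^ (C₁ + 1) with hK₂
    have hK₂2 : 2 ≤ K₂ := by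
      calc 2 ≤ K₁ := hK₁2
        _ = K₁ ^ 1 := (pow_one _).symm
        _ ≤ K₁ ^ (C₁ + 1) := Nat.pow_le_pow_right (by omega) (by omega)
    have hK₂le : K₂ ≤ K ^ (4 * (C₁ + 1)) := hK₁pow _
    set ε : ℝ := (K₁ : ℝ) ^ C₁ / (N : ℝ) ^ (i + 1) with hε
    obtain ⟨q', hq'1, hq'2, a, ha⟩ := recur N K₂ hK₂2 (by
        have : K₂ ≤ K₁ ^ (2 * C₁ + 1) := Nat.pow_le_pow_right (by omega) (by omega)
        have : 0 < K₂ := by omega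
        omega)
      (q * ((i + 2) * f.coeff (i + 2))) ε (by positivity) (by
        rw [hε, ← mul_div_assoc, div_le_one (by positivity)]
        have : (32 * K₁ ^ (2 * C₁ + 1) : ℝ) ≤ N := by exact_mod_cast hbig
        have h1 : (N : ℝ) ≤ N ^ (i + 1) := by
          exact_mod_cast Nat.le_self_pow (by omega) N
        calc (32 * (K₂ : ℝ) * (K₁ : ℝ) ^ C₁) = 32 * K₁ ^ (2 * C₁ + 1) := by
              rw [hK₂]; push_cast; ring
          _ ≤ N := this
          _ ≤ _ := h1) H' (by
        intro h hh
        have := (Finset.mem_filter.1 (Finset.mem_filter.1 hh).1).1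
        exact (Finset.mem_range.1 this).trans_le hMN) (by
        calc (N : ℝ) ≤ K₁ * H.card := hHcard
          _ = K₂ * (H.card / (K₁ : ℝ) ^ C₁) := by
            rw [hK₂]; push_cast; field_simp; ring
          _ ≤ _ := by gcongr) (by
        intro h hh
        obtain ⟨hh1, hh2⟩ := Finset.mem_filter.1 hh
        obtain ⟨-, -, a, ha⟩ := hQ h hh1
        refine ⟨a, ?_⟩
        rw [hε, le_div_iff₀ (by positivity)]
        rw [hh2] at ha
        refine le_trans (le_of_eq ?_) ha
        congr 3; ring)
    refine ⟨q' * q * (i + 2), ?_, ?_, a, ?_⟩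
    · exact Nat.mul_pos (Nat.mul_pos hq'1 hq1) (by omega)
    · calc q' * q * (i + 2) ≤ (2 * K₂) * K₁ ^ C₁ * (i + 2) := by gcongr
        _ ≤ (K ^ 1 * K ^ (4 * (C₁ + 1))) * K ^ (4 * C₁) * K ^ (i + 2) := by
          refine Nat.mul_le_mul (Nat.mul_le_mul (Nat.mul_le_mul ?_ hK₂le) (hK₁pow _))
            (two_pow_bound K hK _)
          simpa using hK
        _ = K ^ (1 + 4 * (C₁ + 1) + 4 * C₁ + (i + 2)) := by ring
        _ ≤ K ^ C := hpow _ _ (by omega)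
    · have e1 : ((q' * q * (i + 2) : ℕ) : ℝ) * f.coeff (i + 1 + 1) =
          q' * (q * ((i + 2) * f.coeff (i + 2))) := by push_cast; ring
      rw [e1, pow_succ (N : ℝ) (i + 1), mul_comm ((N : ℝ) ^ (i + 1)) N, ← mul_assoc]
      calc _ ≤ (16 * (K₂ : ℝ) ^ 2 * ε) * (N : ℝ) ^ (i + 1) := by gcongr
        _ = ((16 * K₂ ^ 2 * K₁ ^ C₁ : ℕ) : ℝ) := by
          rw [hε]; push_cast; field_simp
        _ ≤ ((K ^ C : ℕ) : ℝ) := by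
          norm_cast
          calc 16 * K₂ ^ 2 * K₁ ^ C₁ ≤ K ^ 4 * (K ^ (4 * (C₁ + 1))) ^ 2 * K ^ (4 * C₁) := by
                refine Nat.mul_le_mul (Nat.mul_le_mul ?_ (Nat.pow_le_pow_left hK₂le 2)) (hK₁pow _)
                calc 16 = 2 ^ 4 := by norm_num
                  _ ≤ K ^ 4 := Nat.pow_le_pow_left hK 4
            _ = K ^ (4 + 4 * (C₁ + 1) * 2 + 4 * C₁) := by ring
            _ ≤ K ^ C := hpow _ _ (by omega)
        _ = _ := by push_cast; ring

/-- Some progression of difference `q` and length at most `L` carries its share of the sum. -/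
lemma block (F : ℕ → ℂ) (M q L : ℕ) (hq : 1 ≤ q) (hL : 1 ≤ L) :
    ∃ x₀ n : ℕ, n ≤ L ∧ (∀ y < n, x₀ + q * y < M) ∧
      ‖∑ x ∈ range M, F x‖ ≤ (q * ((M / (q * L) : ℕ) + 1) : ℝ) *
        ‖∑ y ∈ range n, F (x₀ + q * y)‖ := by
  by_contra hcon
  push Not at hcon
  set t := range q ×ˢ range (M / (q * L) + 1) with ht
  have hmap : ∀ x ∈ range M, (x % q, x / q / L) ∈ t := by
    intro x hx
    simp only [ht, Finset.mem_product, Finset.mem_range]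
    refine ⟨Nat.mod_lt _ hq, ?_⟩
    rw [Nat.div_div_eq_div_mul]
    exact Nat.lt_succ_of_le (Nat.div_le_div_right (Finset.mem_range.1 hx).le)
  have hsum := Finset.sum_fiberwise_of_maps_to hmap F
  have hfib : ∀ p ∈ t, (q * ((M / (q * L) : ℕ) + 1) : ℝ) *
      ‖∑ x ∈ range M with (x % q, x / q / L) = p, F x‖ < ‖∑ x ∈ range M, F x‖ := by
    rintro ⟨r, b⟩ hp
    simp only [ht, Finset.mem_product, Finset.mem_range] at hp
    set x₀ := r + q * (b * L) with hx₀
    set n := min L ((M - x₀ + (q - 1)) / q) with hn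
    have hlt : ∀ y, y < (M - x₀ + (q - 1)) / q ↔ x₀ + q * y < M := by
      intro y
      rw [Nat.lt_iff_add_one_le, Nat.le_div_iff_mul_le (by omega), add_mul, one_mul, mul_comm y q]
      omega
    have h1 := hcon x₀ n (min_le_left _ _) (fun y hy => (hlt y).1 (hy.trans_le (min_le_right _ _)))
    have h2 : ∑ x ∈ range M with (x % q, x / q / L) = (r, b), F x =
        ∑ y ∈ range n, F (x₀ + q * y) := by
      symm
      apply Finset.sum_bij (fun y _ => x₀ + q * y)
      · intro y hy
        rw [Finset.mem_range] at hy
        have hy1 : y < L := hy.trans_le (min_le_left _ _)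
        have hy2 := (hlt y).1 (hy.trans_le (min_le_right _ _))
        simp only [Finset.mem_filter, Finset.mem_range, Prod.mk.injEq]
        have e : x₀ + q * y = r + q * (b * L + y) := by rw [hx₀]; ring
        have e2 : (r + q * (b * L + y)) / q = b * L + y := by
          rw [Nat.add_mul_div_left _ _ (by omega), Nat.div_eq_of_lt hp.1, zero_add]
        refine ⟨hy2, ?_, ?_⟩
        · rw [e, Nat.add_mul_mod_self_left, Nat.mod_eq_of_lt hp.1]
        · rw [e, e2, mul_comm b L, Nat.mul_add_div (by omega), Nat.div_eq_of_lt hy1, add_zero]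
      · intro y _ y' _ h
        have : q * y = q * y' := by simpa using h
        exact Nat.eq_of_mul_eq_mul_left (by omega) this
      · intro x hx
        simp only [Finset.mem_filter, Finset.mem_range, Prod.mk.injEq] at hx
        obtain ⟨hxM, hxr, hxb⟩ := hx
        have e1 := Nat.div_add_mod x q
        have e2 := Nat.div_add_mod (x / q) L
        have hxx : x₀ + q * (x / q % L) = x := by
          rw [hx₀, ← hxb, ← hxr]
          calc x % q + q * (x / q / L * L) + q * (x / q % L)
              = q * (L * (x / q / L) + x / q % L) + x % q := by ring
            _ = x := by rw [e2, e1]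
        refine ⟨x / q % L, ?_, hxx⟩
        rw [Finset.mem_range, hn, lt_min_iff]
        exact ⟨Nat.mod_lt _ hL, (hlt _).2 (by rw [hxx]; exact hxM)⟩
      · intro y _; rfl
    rw [h2]; exact h1
  have hcard : (t.card : ℝ) = q * ((M / (q * L) : ℕ) + 1) := by
    rw [ht, Finset.card_product, Finset.card_range, Finset.card_range]; push_cast; rfl
  have hne : t.Nonempty := ⟨(0, 0), by simp [ht]; omega⟩
  have hlt := Finset.sum_lt_sum_of_nonempty hne hfib
  rw [← Finset.mul_sum, Finset.sum_const, nsmul_eq_mul, ← hcard] at hlt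
  have hpos : (0 : ℝ) < t.card := by exact_mod_cast hne.card_pos
  have h3 := lt_of_mul_lt_mul_left hlt hpos.le
  rw [← hsum] at h3
  exact absurd (norm_sum_le _ _) (not_le.2 h3)

/-- `x ↦ α x^j` is almost constant modulo one on short progressions. -/
lemma mono_approx (α A : ℝ) (q j N L x₀ y : ℕ) (hN : 0 < N) (hj : 1 ≤ j) (hy : y ≤ L)
    (hx : x₀ + q * y < N) (a : ℤ) (ha : |q * α - a| * (N : ℝ) ^ j ≤ A) :
    ∃ b : ℤ, |α * ((x₀ + q * y : ℕ) : ℝ) ^ j - α * (x₀ : ℝ) ^ j - b| ≤ j * A * L / N := by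
  set s : ℕ := ∑ i ∈ range j, (x₀ + q * y) ^ i * x₀ ^ (j - 1 - i) with hs
  have hgeom : ((x₀ + q * y : ℕ) : ℝ) ^ j - (x₀ : ℝ) ^ j = s * (q * y) := by
    have := (Commute.all ((x₀ + q * y : ℕ) : ℝ) (x₀ : ℝ)).geom_sum₂_mul j
    rw [← this, hs]; push_cast; ring
  have hsle : s ≤ j * N ^ (j - 1) := by
    rw [hs]
    refine (Finset.sum_le_card_nsmul _ _ (N ^ (j - 1)) ?_).trans (by simp)
    intro i hi
    have hi := Finset.mem_range.1 hi
    calc (x₀ + q * y) ^ i * x₀ ^ (j - 1 - i) ≤ N ^ i * N ^ (j - 1 - i) := by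
          apply Nat.mul_le_mul
          · exact Nat.pow_le_pow_left hx.le _
          · exact Nat.pow_le_pow_left (by nlinarith [Nat.zero_le (q * y)]) _
      _ = N ^ (j - 1) := by rw [← pow_add]; congr 1; omega
  refine ⟨a * (s * y), ?_⟩
  have e : α * ((x₀ + q * y : ℕ) : ℝ) ^ j - α * (x₀ : ℝ) ^ j - ((a * (s * y) : ℤ) : ℝ) =
      (q * α - a) * (s * y) := by
    rw [← mul_sub, hgeom]; push_cast; ring
  rw [e, abs_mul, abs_of_nonneg (by positivity : (0 : ℝ) ≤ s * y)]
  have hNr : (0 : ℝ) < N := by exact_mod_cast hN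
  rw [le_div_iff₀ hNr]
  have hs' : (s : ℝ) ≤ j * (N : ℝ) ^ (j - 1) := by exact_mod_cast hsle
  have hy' : (y : ℝ) ≤ L := by exact_mod_cast hy
  have hNj : (N : ℝ) ^ j = N ^ (j - 1) * N := by
    rw [← pow_succ]; congr 1; omega
  calc |q * α - a| * (s * y) * N ≤ |q * α - a| * ((j * (N : ℝ) ^ (j - 1)) * L) * N := by gcongr
    _ = j * (|q * α - a| * (N : ℝ) ^ j) * L := by rw [hNj]; ring
    _ ≤ j * A * L := by gcongr

noncomputable def trunc (f : Polynomial ℝ) (i : ℕ) : Polynomial ℝ :=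
  ∑ j ∈ range (i + 1), Polynomial.monomial j (f.coeff j)

lemma trunc_coeff (f : Polynomial ℝ) (i n : ℕ) :
    (trunc f i).coeff n = if n ≤ i then f.coeff n else 0 := by
  unfold trunc
  rw [Polynomial.finset_sum_coeff]
  simp only [Polynomial.coeff_monomial]
  rw [Finset.sum_ite_eq']
  simp

lemma trunc_natDegree (f : Polynomial ℝ) (i : ℕ) : (trunc f i).natDegree ≤ i := by
  rw [Polynomial.natDegree_le_iff_coeff_eq_zero]
  intro n hn
  rw [trunc_coeff, if_neg (by omega)]

lemma trunc_eval (f : Polynomial ℝ) (i k : ℕ) (hf : f.natDegree ≤ k) (hik : i ≤ k) (x : ℝ) :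
    f.eval x = (trunc f i).eval x + ∑ j ∈ Finset.Ico (i + 1) (k + 1), f.coeff j * x ^ j := by
  rw [Polynomial.eval_eq_sum_range' (n := k + 1) (by omega)]
  unfold trunc
  rw [Polynomial.eval_finset_sum, ← Finset.sum_range_add_sum_Ico _ (show i + 1 ≤ k + 1 by omega)]
  simp

/-- the polynomial `f_{≤ i}(x₀ + q y) + c`. -/
lemma shifted_poly (f : Polynomial ℝ) (i q x₀ : ℕ) (hi : 1 ≤ i) (c : ℝ) :
    ∃ g : Polynomial ℝ, g.natDegree ≤ i ∧ g.coeff i = (q : ℝ) ^ i * f.coeff i ∧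
      ∀ y : ℕ, g.eval (y : ℝ) = (trunc f i).eval ((x₀ + q * y : ℕ) : ℝ) + c := by
  refine ⟨(Polynomial.taylor (x₀ : ℝ) (trunc f i)).comp (Polynomial.C (q : ℝ) * Polynomial.X)
    + Polynomial.C c, ?_, ?_, ?_⟩
  · rw [Polynomial.natDegree_add_C]
    refine Polynomial.natDegree_comp_le.trans ?_
    rw [Polynomial.natDegree_taylor]
    calc _ ≤ i * 1 := Nat.mul_le_mul (trunc_natDegree f i) ((Polynomial.natDegree_C_mul_le _ _).trans Polynomial.natDegree_X_le)
      _ = i := mul_one i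
  · rw [Polynomial.coeff_add, Polynomial.comp_C_mul_X_coeff,
      taylor_coeff_top _ _ (trunc_natDegree f i), trunc_coeff, if_pos le_rfl,
      Polynomial.coeff_C_of_ne_zero (by omega)]
    ring
  · intro y
    simp only [Polynomial.eval_add, Polynomial.eval_comp, Polynomial.taylor_eval,
      Polynomial.eval_mul, Polynomial.eval_C, Polynomial.eval_X]
    congr 2; push_cast; ring

lemma poly_approx (f : Polynomial ℝ) (k i : ℕ) (hf : f.natDegree ≤ k) (hik : i ≤ k) (A : ℝ)
    (hA : 0 ≤ A)
    (q N L x₀ y : ℕ) (hN : 0 < N) (hy : y ≤ L) (hx : x₀ + q * y < N)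
    (ha : ∀ j, i < j → j ≤ k → ∃ a : ℤ, |q * f.coeff j - a| * (N : ℝ) ^ j ≤ A) :
    ‖ee (f.eval ((x₀ + q * y : ℕ) : ℝ)) - ee ((trunc f i).eval ((x₀ + q * y : ℕ) : ℝ) +
      ∑ j ∈ Finset.Ico (i + 1) (k + 1), f.coeff j * (x₀ : ℝ) ^ j)‖ ≤
        2 * π * (k * (k * A * L / N)) := by
  have hb : ∀ j, ∃ b : ℤ, j ∈ Finset.Ico (i + 1) (k + 1) →
      |f.coeff j * ((x₀ + q * y : ℕ) : ℝ) ^ j - f.coeff j * (x₀ : ℝ) ^ j - b| ≤ k * A * L / N := by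
    intro j
    by_cases hj : j ∈ Finset.Ico (i + 1) (k + 1)
    · have hj' := Finset.mem_Ico.1 hj
      obtain ⟨a, ha⟩ := ha j (by omega) (by omega)
      obtain ⟨b, hb⟩ := mono_approx (f.coeff j) A q j N L x₀ y hN (by omega) hy hx a ha
      refine ⟨b, fun _ => hb.trans ?_⟩
      have : (j : ℝ) ≤ k := by exact_mod_cast (by omega : j ≤ k)
      gcongr
    · exact ⟨0, fun h => absurd h hj⟩
  choose b hb using hb
  refine (ee_dist _ _ (∑ j ∈ Finset.Ico (i + 1) (k + 1), b j)).trans ?_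
  gcongr
  rw [trunc_eval f i k hf hik]
  have e : ∀ T U V W : ℝ, T + U - (T + V) - W = U - V - W := by intros; ring
  rw [e]
  push_cast
  rw [← Finset.sum_sub_distrib, ← Finset.sum_sub_distrib]
  refine (Finset.abs_sum_le_sum_abs _ _).trans ?_
  have hb' : ∀ j ∈ Finset.Ico (i + 1) (k + 1), |f.coeff j * ((x₀ : ℝ) + q * y) ^ j -
      f.coeff j * (x₀ : ℝ) ^ j - b j| ≤ k * A * L / N := by
    intro j hj
    have := hb j hj
    push_cast at this
    exact this
  refine (Finset.sum_le_card_nsmul _ _ _ hb').trans ?_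
  rw [Nat.card_Ico, nsmul_eq_mul]
  have : ((k + 1 - (i + 1) : ℕ) : ℝ) ≤ k := by exact_mod_cast (by omega)
  have h0 : 0 ≤ k * A * L / (N : ℝ) := by positivity
  gcongr

/-- Inverse theorem for all coefficients. -/
lemma weyl_all (k s : ℕ) : ∃ C : ℕ, ∀ f : Polynomial ℝ, f.natDegree ≤ k →
    ∀ K M N : ℕ, 2 ≤ K → M ≤ N → (N : ℝ) ≤ K * ‖∑ x ∈ range M, ee (f.eval (x : ℝ))‖ →
    ∃ q : ℕ, 1 ≤ q ∧ q ≤ K ^ C ∧ ∀ j, 1 ≤ j → j ≤ k → k < j + s →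
      ∃ a : ℤ, |q * f.coeff j - a| * (N : ℝ) ^ j ≤ (K : ℝ) ^ C := by
  induction s with
  | zero => exact ⟨0, fun f hf K M N hK hMN hS => ⟨1, le_rfl, by simp, by intros; omega⟩⟩
  | succ s ih =>
    obtain ⟨C, hC⟩ := ih
    rcases le_or_gt k s with hks | hks
    · refine ⟨C, fun f hf K M N hK hMN hS => ?_⟩
      obtain ⟨q, h1, h2, h3⟩ := hC f hf K M N hK hMN hS
      exact ⟨q, h1, h2, fun j hj1 hj2 _ => h3 j hj1 hj2 (by omega)⟩
    obtain ⟨i, hi⟩ : ∃ i, k = i + 1 + s := ⟨k - s - 1, by omega⟩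
    obtain ⟨C₁, hC₁⟩ := weyl_top i
    set E : ℕ := 5 + 2 * k + 1 + C with hE
    refine ⟨3 * C₁ + C * k + C + (1 + E) * k, ?_⟩
    intro f hf K M N hK hMN hS
    set C' : ℕ := 3 * C₁ + C * k + C + (1 + E) * k with hC'
    have hEk : (1 + E) * k = k + E * k := by ring
    have hK1 : 1 ≤ K := by omega
    have hKr : (2 : ℝ) ≤ K := by exact_mod_cast hK
    have hpow : ∀ a b : ℕ, a ≤ b → K ^ a ≤ K ^ b := fun a b h => Nat.pow_le_pow_right hK1 h
    set D := K ^ E with hD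
    have hD1 : 1 ≤ D := Nat.one_le_pow _ _ hK1
    rcases lt_or_ge N D with hsmall | hbig
    · refine ⟨1, le_rfl, Nat.one_le_pow _ _ hK1, fun j hj1 hj2 _ => ⟨round (f.coeff j), ?_⟩⟩
      have h1 : N ^ j ≤ K ^ C' := by
        calc N ^ j ≤ D ^ j := Nat.pow_le_pow_left hsmall.le _
          _ ≤ D ^ k := Nat.pow_le_pow_right hD1 hj2
          _ = K ^ (E * k) := (pow_mul _ _ _).symm
          _ ≤ K ^ C' := hpow _ _ (by omega)
      have h2 := abs_sub_round (f.coeff j)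
      have h3 : (N : ℝ) ^ j ≤ (K : ℝ) ^ C' := by exact_mod_cast h1
      have h4 : (0 : ℝ) ≤ (N : ℝ) ^ j := by positivity
      simp only [Nat.cast_one, one_mul]
      nlinarith
    have hN0 : 0 < N := by omega
    have hNr : (0 : ℝ) < N := by exact_mod_cast hN0
    obtain ⟨q, hq1, hq2, hq3⟩ := hC f hf K M N hK hMN hS
    set L := N / D with hL
    have hL1 : 1 ≤ L := (Nat.one_le_div_iff hD1).2 hbig
    have hLr : (0 : ℝ) < L := by exact_mod_cast hL1
    have hDL : D * L ≤ N := Nat.mul_div_le N D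
    have hDL2 : N ≤ 2 * D * L := by
      have := Nat.lt_mul_div_succ N (show 0 < D by omega)
      rw [← hL] at this
      nlinarith
    have hqD : q ≤ D := hq2.trans (hpow _ _ (by omega))
    have hqL : q * L ≤ N := (Nat.mul_le_mul_right L hqD).trans hDL
    obtain ⟨x₀, n, hnL, hxM, hblock⟩ := block (fun x => ee (f.eval (x : ℝ))) M q L hq1 hL1
    set c := ∑ j ∈ Finset.Ico (i + 1 + 1) (k + 1), f.coeff j * (x₀ : ℝ) ^ j with hc
    obtain ⟨g, hg1, hg2, hg3⟩ := shifted_poly f (i + 1) q x₀ (by omega) c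
    set S' := ∑ y ∈ range n, ee (f.eval ((x₀ + q * y : ℕ) : ℝ)) with hS'
    set S'' := ∑ y ∈ range n, ee (g.eval (y : ℝ)) with hS''
    have hb1 : (L : ℝ) ≤ 2 * K * ‖S'‖ := by
      have hqr : (0 : ℝ) < q := by exact_mod_cast hq1
      have h1 : (q * ((M / (q * L) : ℕ) + 1) : ℝ) ≤ 2 * N / L := by
        have a3 : ((M / (q * L) : ℕ) : ℝ) ≤ M / (q * L) := by
          have := Nat.cast_div_le (α := ℝ) (m := M) (n := q * L)
          push_cast at this; exact this
        have a4 : (M : ℝ) ≤ N := by exact_mod_cast hMN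
        have a5 : (q : ℝ) ≤ N / L := by
          rw [le_div_iff₀ hLr]; exact_mod_cast hqL
        calc (q * ((M / (q * L) : ℕ) + 1) : ℝ) ≤ q * (N / (q * L) + 1) := by
              gcongr
              exact a3.trans (by gcongr)
          _ = N / L + q := by field_simp
          _ ≤ N / L + N / L := by gcongr
          _ = 2 * N / L := by ring
      have h2 : (N : ℝ) ≤ K * (2 * N / L * ‖S'‖) := by
        refine hS.trans ?_
        gcongr
        exact hblock.trans (by gcongr)
      have h3 : (N : ℝ) * L ≤ N * (2 * K * ‖S'‖) := by
        calc (N : ℝ) * L ≤ K * (2 * N / L * ‖S'‖) * L := by gcongr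
          _ = _ := by field_simp
      exact le_of_mul_le_mul_left h3 hNr
    have hb2 : ‖S' - S''‖ * (4 * K) ≤ L := by
      have hterm : ∀ y ∈ range n, ‖ee (f.eval ((x₀ + q * y : ℕ) : ℝ)) - ee (g.eval (y : ℝ))‖ ≤
          1 / (4 * K) := by
        intro y hy
        have hy := Finset.mem_range.1 hy
        rw [hg3]
        refine (poly_approx f k (i + 1) hf (by omega) ((K : ℝ) ^ C) (by positivity) q N L x₀ y hN0
          (by omega) ((hxM y hy).trans_le hMN) (fun j hj1 hj2 => hq3 j (by omega) hj2 (by omega))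
          ).trans ?_
        rw [le_div_iff₀ (by positivity)]
        have hnat : 32 * (k * k) * K * K ^ C * L ≤ N := by
          refine le_trans ?_ hDL
          apply Nat.mul_le_mul_right
          calc 32 * (k * k) * K * K ^ C ≤ K ^ 5 * (K ^ k * K ^ k) * K * K ^ C := by
                apply Nat.mul_le_mul_right
                apply Nat.mul_le_mul_right
                apply Nat.mul_le_mul
                · calc 32 = 2 ^ 5 := by norm_num
                    _ ≤ K ^ 5 := Nat.pow_le_pow_left hK 5
                · exact Nat.mul_le_mul (two_pow_bound K hK k) (two_pow_bound K hK k)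
            _ = D := by rw [hD, hE]; ring
        have hreal : 32 * ((k : ℝ) * k) * K * (K : ℝ) ^ C * L ≤ N := by exact_mod_cast hnat
        have hpi : π ≤ 4 := Real.pi_le_four
        calc 2 * π * (k * (k * (K : ℝ) ^ C * L / N)) * (4 * K)
            ≤ 2 * 4 * (k * (k * (K : ℝ) ^ C * L / N)) * (4 * K) := by gcongr
          _ = (32 * ((k : ℝ) * k) * K * (K : ℝ) ^ C * L) / N := by ring
          _ ≤ 1 := by rw [div_le_one hNr]; exact hreal
      have h1 : ‖S' - S''‖ ≤ n * (1 / (4 * K)) := by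
        rw [hS', hS'', ← Finset.sum_sub_distrib]
        refine (norm_sum_le _ _).trans ?_
        refine (Finset.sum_le_card_nsmul _ _ _ hterm).trans ?_
        rw [Finset.card_range, nsmul_eq_mul]
      have h2 : (n : ℝ) ≤ L := by exact_mod_cast hnL
      calc ‖S' - S''‖ * (4 * K) ≤ n * (1 / (4 * K)) * (4 * K) := by gcongr
        _ = n := by field_simp
        _ ≤ L := h2
    have hb3 : (L : ℝ) ≤ ((4 * K : ℕ) : ℝ) * ‖S''‖ := by
      have h1 : ‖S'‖ ≤ ‖S''‖ + ‖S' - S''‖ := by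
        have := norm_add_le S'' (S' - S'')
        simpa using this
      push_cast
      have h2 : 2 * K * ‖S'‖ ≤ 2 * K * (‖S''‖ + ‖S' - S''‖) := by gcongr
      nlinarith
    obtain ⟨q', hq'1, hq'2, a, ha⟩ := hC₁ g hg1 (4 * K) n L (by omega) hnL hb3
    have h4K : (4 * K) ^ C₁ ≤ K ^ (3 * C₁) := by
      rw [pow_mul]
      apply Nat.pow_le_pow_left
      nlinarith [Nat.mul_le_mul hK hK]
    have hq'3 := hq'2.trans h4K
    have hqpow : ∀ m, m ≤ k → q ^ m ≤ K ^ (C * k) := by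
      intro m hm
      calc q ^ m ≤ q ^ k := Nat.pow_le_pow_right hq1 hm
        _ ≤ (K ^ C) ^ k := Nat.pow_le_pow_left hq2 k
        _ = K ^ (C * k) := (pow_mul _ _ _).symm
    refine ⟨q' * q ^ (i + 1), Nat.mul_pos hq'1 (Nat.pow_pos hq1), ?_, ?_⟩
    · calc q' * q ^ (i + 1) ≤ K ^ (3 * C₁) * K ^ (C * k) := Nat.mul_le_mul hq'3 (hqpow _ (by omega))
        _ = K ^ (3 * C₁ + C * k) := (pow_add _ _ _).symm
        _ ≤ K ^ C' := hpow _ _ (by omega)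
    · intro j hj1 hj2 hj3
      rcases lt_or_ge k (j + s) with hold | hnew
      · obtain ⟨b, hb⟩ := hq3 j hj1 hj2 hold
        refine ⟨q' * q ^ i * b, ?_⟩
        have e : ((q' * q ^ (i + 1) : ℕ) : ℝ) * f.coeff j - ((q' * q ^ i * b : ℤ) : ℝ) =
            ((q' * q ^ i : ℕ) : ℝ) * (q * f.coeff j - b) := by push_cast; ring
        rw [e, abs_mul, Nat.abs_cast, mul_assoc]
        calc ((q' * q ^ i : ℕ) : ℝ) * (|q * f.coeff j - b| * (N : ℝ) ^ j)
            ≤ ((K ^ (3 * C₁) * K ^ (C * k) : ℕ) : ℝ) * (K : ℝ) ^ C := by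
              have := Nat.mul_le_mul hq'3 (hqpow i (by omega))
              have : ((q' * q ^ i : ℕ) : ℝ) ≤ ((K ^ (3 * C₁) * K ^ (C * k) : ℕ) : ℝ) := by
                exact_mod_cast this
              gcongr
          _ = ((K ^ (3 * C₁ + C * k + C) : ℕ) : ℝ) := by push_cast; ring
          _ ≤ ((K ^ C' : ℕ) : ℝ) := by exact_mod_cast hpow _ _ (by omega)
          _ = _ := by push_cast; ring
      · have hji : j = i + 1 := by omega
        subst hji
        refine ⟨a, ?_⟩
        rw [hg2] at ha
        have e : ((q' * q ^ (i + 1) : ℕ) : ℝ) * f.coeff (i + 1) =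
            q' * ((q : ℝ) ^ (i + 1) * f.coeff (i + 1)) := by push_cast; ring
        rw [e]
        have hNle : (N : ℝ) ^ (i + 1) ≤ ((2 * D : ℕ) : ℝ) ^ (i + 1) * (L : ℝ) ^ (i + 1) := by
          rw [← mul_pow]
          have : (N : ℝ) ≤ ((2 * D : ℕ) : ℝ) * L := by exact_mod_cast hDL2
          gcongr
        have h2D : (2 * D) ^ (i + 1) ≤ K ^ ((1 + E) * k) := by
          calc (2 * D) ^ (i + 1) ≤ (K ^ (1 + E)) ^ (i + 1) := by
                apply Nat.pow_le_pow_left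
                rw [pow_add, pow_one]; exact Nat.mul_le_mul_right _ hK
            _ ≤ (K ^ (1 + E)) ^ k := Nat.pow_le_pow_right (Nat.one_le_pow _ _ hK1) (by omega)
            _ = _ := (pow_mul _ _ _).symm
        set w := |q' * ((q : ℝ) ^ (i + 1) * f.coeff (i + 1)) - a|
        calc w * (N : ℝ) ^ (i + 1) ≤ w * (((2 * D : ℕ) : ℝ) ^ (i + 1) * (L : ℝ) ^ (i + 1)) := by
              gcongr
          _ = ((2 * D : ℕ) : ℝ) ^ (i + 1) * (w * (L : ℝ) ^ (i + 1)) := by ring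
          _ ≤ ((2 * D : ℕ) : ℝ) ^ (i + 1) * ((4 * K : ℕ) : ℝ) ^ C₁ := by gcongr
          _ = (((2 * D) ^ (i + 1) * (4 * K) ^ C₁ : ℕ) : ℝ) := by push_cast; ring
          _ ≤ ((K ^ C' : ℕ) : ℝ) := by
            norm_cast
            calc (2 * D) ^ (i + 1) * (4 * K) ^ C₁ ≤ K ^ ((1 + E) * k) * K ^ (3 * C₁) :=
                  Nat.mul_le_mul h2D h4K
              _ = K ^ ((1 + E) * k + 3 * C₁) := (pow_add _ _ _).symm
              _ ≤ K ^ C' := hpow _ _ (by omega)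
          _ = _ := by push_cast; ring

/-- Weyl sum bound: there are `τ, ρ, X₀ > 0` such that for all positive integers `d, m`
and all `X ≥ X₀` with `m < X^ρ`, `|∑_{x=1}^{⌊X⌋} e(m·P(d·x)/d)| ≤ X^(1-τ)`. -/
theorem statement2 (P : Polynomial ℝ) (hP : ¬ IsLiouvilleNumber (P.coeff 1)) :
    ∃ τ > (0 : ℝ), ∃ ρ > (0 : ℝ), ∃ X₀ > (0 : ℝ),
      ∀ d : ℕ, 0 < d → ∀ m : ℕ, 0 < m → ∀ X : ℝ, X ≥ X₀ → (m : ℝ) < X ^ ρ →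
        ‖∑ x ∈ Finset.Icc 1 ⌊X⌋₊,
            Complex.exp (2 * (π : ℂ) * Complex.I *
              (((m : ℝ) * P.eval ((d * x : ℕ) : ℝ) / (d : ℝ) : ℝ) : ℂ))‖ ≤ X ^ (1 - τ) := by
  unfold IsLiouvilleNumber at hP
  push Not at hP
  obtain ⟨n, hn⟩ := hP
  obtain ⟨C, hC⟩ := weyl_all (P.natDegree + 1) (P.natDegree + 1)
  set B : ℝ := 5 ^ C * (2 * 5 ^ C) ^ n with hB
  have hBpos : 0 < B := by positivity
  set τ : ℝ := 1 / (4 * (C + 1) * (n + 1)) with hτ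
  set ρ : ℝ := 1 / (4 * (n + 1)) with hρ
  have hτpos : 0 < τ := by positivity
  have hρpos : 0 < ρ := by positivity
  refine ⟨τ, hτpos, ρ, hρpos, max 16 (B ^ 2), by positivity, ?_⟩
  intro d hd m hm X hX hmX
  have hX16 : 16 ≤ X := (le_max_left _ _).trans hX
  have hXB : B ^ 2 ≤ X := (le_max_right _ _).trans hX
  have hX0 : 0 < X := by linarith
  have hX1 : 1 ≤ X := by linarith
  set R : ℝ := X ^ (1 / 2 : ℝ) with hR
  have hR0 : 0 < R := Real.rpow_pos_of_pos hX0 _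
  have hRR : R * R = X := by
    rw [hR, ← Real.rpow_add hX0]; norm_num
  have hR4 : 4 ≤ R := by nlinarith
  have hRB : B ≤ R := by nlinarith
  have hτ4 : τ ≤ 1 / 2 := by
    rw [hτ, div_le_div_iff₀ (by positivity) (by norm_num)]
    have : (0 : ℝ) ≤ C := by positivity
    have : (0 : ℝ) ≤ n := by positivity
    nlinarith [mul_nonneg ‹(0 : ℝ) ≤ C› ‹(0 : ℝ) ≤ n›]
  have hexp : τ * C + (τ * C + ρ) * n ≤ 1 / 2 := by
    have h1 : τ * ((C + 1) * (n + 1)) = 1 / 4 := by rw [hτ]; field_simp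
    have h2 : ρ * (n + 1) = 1 / 4 := by rw [hρ]; field_simp
    nlinarith [mul_nonneg hτpos.le (Nat.cast_nonneg (α := ℝ) n)]
  set Y : ℝ := X ^ τ with hY
  have hY1 : 1 ≤ Y := Real.one_le_rpow hX1 hτpos.le
  have hYR : Y ≤ R := Real.rpow_le_rpow_of_exponent_le hX1 hτ4
  have hYX : Y * X ^ (1 - τ) = X := by
    rw [hY, ← Real.rpow_add hX0]; simp
  by_contra hcon
  push Not at hcon
  set f : Polynomial ℝ := Polynomial.C ((m : ℝ) / d) * P.comp (Polynomial.C (d : ℝ) * Polynomial.X)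
    with hf
  have hdr : (0 : ℝ) < d := by exact_mod_cast hd
  have hmr : (1 : ℝ) ≤ m := by exact_mod_cast hm
  have hfdeg : f.natDegree ≤ P.natDegree + 1 := by
    refine (Polynomial.natDegree_C_mul_le _ _).trans ?_
    refine Polynomial.natDegree_comp_le.trans ?_
    calc _ ≤ P.natDegree * 1 := Nat.mul_le_mul_left _
          ((Polynomial.natDegree_C_mul_le _ _).trans Polynomial.natDegree_X_le)
      _ ≤ _ := by omega
  have hfcoeff : f.coeff 1 = m * P.coeff 1 := by
    rw [hf, Polynomial.coeff_C_mul, Polynomial.comp_C_mul_X_coeff]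
    field_simp
  have hfeval : ∀ x : ℕ, f.eval (x : ℝ) = (m : ℝ) * P.eval ((d * x : ℕ) : ℝ) / (d : ℝ) := by
    intro x
    rw [hf]
    simp only [Polynomial.eval_mul, Polynomial.eval_comp, Polynomial.eval_C, Polynomial.eval_X]
    push_cast; ring
  have hsum : ∑ x ∈ range (⌊X⌋₊ + 1), ee (f.eval (x : ℝ)) =
      ee (f.eval ((0 : ℕ) : ℝ)) + ∑ x ∈ Finset.Icc 1 ⌊X⌋₊,
            Complex.exp (2 * (π : ℂ) * Complex.I *
              (((m : ℝ) * P.eval ((d * x : ℕ) : ℝ) / (d : ℝ) : ℝ) : ℂ)) := by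
    rw [Finset.range_eq_Ico, Finset.sum_eq_sum_Ico_succ_bot (by omega)]
    congr 1
    apply Finset.sum_congr
    · ext x; simp only [Finset.mem_Ico, Finset.mem_Icc]; omega
    · intro x _
      rw [hfeval]; rfl
  set T := ∑ x ∈ Finset.Icc 1 ⌊X⌋₊, Complex.exp (2 * (π : ℂ) * Complex.I *
              (((m : ℝ) * P.eval ((d * x : ℕ) : ℝ) / (d : ℝ) : ℝ) : ℂ)) with hT
  have hnorm : X ^ (1 - τ) - 1 ≤ ‖∑ x ∈ range (⌊X⌋₊ + 1), ee (f.eval (x : ℝ))‖ := by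
    rw [hsum]
    have h1 := norm_sub_le (ee (f.eval ((0 : ℕ) : ℝ)) + T) (ee (f.eval ((0 : ℕ) : ℝ)))
    rw [add_sub_cancel_left, norm_ee] at h1
    linarith
  set K : ℕ := ⌈4 * Y⌉₊ with hK
  have hK1 : 4 * Y ≤ K := Nat.le_ceil _
  have hK2 : (K : ℝ) ≤ 5 * Y := by
    have := (Nat.ceil_lt_add_one (show 0 ≤ 4 * Y by linarith)).le
    linarith
  have hKge : 2 ≤ K := by
    have : (2 : ℝ) ≤ K := by linarith
    exact_mod_cast this
  set N : ℕ := ⌊X⌋₊ + 1 with hN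
  have hN1 : X ≤ N := by rw [hN]; push_cast; exact (Nat.lt_floor_add_one X).le
  have hN2 : (N : ℝ) ≤ X + 1 := by
    rw [hN]; push_cast; linarith [Nat.floor_le hX0.le]
  obtain ⟨q, hq1, hq2, hq3⟩ := hC f hfdeg K N N hKge le_rfl (by
    set s := ‖∑ x ∈ range N, ee (f.eval (x : ℝ))‖
    have h0 : 0 ≤ s := norm_nonneg _
    have h1 : 4 * Y * (X ^ (1 - τ) - 1) ≤ 4 * Y * s := by gcongr
    have h2 : 4 * Y * s ≤ K * s := by gcongr
    have h3 : 4 * Y ≤ X := by nlinarith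
    nlinarith)
  obtain ⟨a, ha⟩ := hq3 1 le_rfl (by omega) (by omega)
  rw [hfcoeff, pow_one] at ha
  have hqr : (1 : ℝ) ≤ q := by exact_mod_cast hq1
  have hq2r : (q : ℝ) ≤ (5 * Y) ^ C := by
    calc (q : ℝ) ≤ ((K ^ C : ℕ) : ℝ) := by exact_mod_cast hq2
      _ = (K : ℝ) ^ C := by push_cast; rfl
      _ ≤ _ := by gcongr
  have hqm : 1 ≤ q * m := Nat.mul_pos hq1 hm
  have hL := hn (2 * a) (2 * (q * m : ℕ)) (by omega)
  push_cast at hL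
  have e1 : P.coeff 1 - 2 * (a : ℝ) / (2 * (q * m)) = (q * (m * P.coeff 1) - a) / (q * m) := by
    field_simp
  have hqm1 : (1 : ℝ) ≤ q * m := by exact_mod_cast hqm
  rw [e1, abs_div, abs_of_pos (show (0 : ℝ) < q * m by linarith), zpow_neg, zpow_natCast] at hL
  set w := |(q : ℝ) * (m * P.coeff 1) - a| with hw
  have hw0 : 0 ≤ w := abs_nonneg _
  have h1 : ((2 * ((q : ℝ) * m)) ^ n)⁻¹ < w := lt_of_lt_of_le hL (div_le_self hw0 hqm1)
  have hpp : 0 < (2 * ((q : ℝ) * m)) ^ n := by positivity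
  have h2 : 1 < w * (2 * ((q : ℝ) * m)) ^ n := by
    rwa [inv_lt_iff_one_lt_mul₀ hpp] at h1
  have hfin : X < X := by
    calc X ≤ N := hN1
      _ = N * 1 := (mul_one _).symm
      _ < N * (w * (2 * ((q : ℝ) * m)) ^ n) := by
        have : (0 : ℝ) < N := by linarith
        gcongr
      _ = (w * N) * (2 * ((q : ℝ) * m)) ^ n := by ring
      _ ≤ (5 * Y) ^ C * (2 * ((5 * Y) ^ C * X ^ ρ)) ^ n := by
        have : w * N ≤ (5 * Y) ^ C := ha.trans (by gcongr)
        gcongr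
      _ = B * (Y ^ C * (Y ^ C * X ^ ρ) ^ n) := by
        rw [hB]; simp only [mul_pow]; ring
      _ = B * X ^ (τ * C + (τ * C + ρ) * n) := by
        rw [hY, Real.rpow_add hX0, Real.rpow_mul hX0.le (τ * C + ρ) n, Real.rpow_add hX0,
          Real.rpow_mul hX0.le, Real.rpow_natCast, Real.rpow_natCast]
      _ ≤ B * R := by
        gcongr
        exact Real.rpow_le_rpow_of_exponent_le hX1 hexp
      _ ≤ R * R := by gcongr
      _ = X := hRR
  exact lt_irrefl _ hfin
end
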